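/- If a Banach space X has property (P), then X is of weak cotype 2. -/

import Mathlib

/-!
Let `E` be an `n`-dimensional subspace of `X`. The proof finds in `E` about `n / 8` vectors to which
property (P) applies and which are images of a Euclidean basis under an operator of norm at most `3`,
and then takes a random section of that operator.

* Put `E` in John position: let `S : ℝⁿ → E` have norm at most one and maximal determinant. Varying
  `S` to first order (`exists_john`) shows that every operator `H` of positive trace satisfies
  `⟪u, H u⟫ ≥ 0` for some contact point `u`, that is, a unit vector with `⟪u, ·⟫ ≤ ‖S ·‖`.
* A barrier argument in the style of Batson, Spielman and Srivastava (`exists_next`, `exists_gram`)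
  selects contact points `u₁, …, u_m`, `m = n / 8`, whose Gram matrix is at least `1 / 8`. The
  potential is the trace of `(G - b)⁻¹`, where `G` is the Gram matrix and `b` decreases slowly.
* The system biorthogonal to the `u_j` defines `T₀ : ℝᵐ → ℝⁿ` of norm at most `3`, and for `T = S T₀`
  the contact property gives `|t_j| = |⟪u_j, T₀ t⟫| ≤ ‖T t‖` (`exists_operator`).
* Property (P) then gives `m / K² ≤ ∫ ‖T t‖² dγ`. By Gaussian concentration
  (`integral_exp_diff_le`, the rotation argument of Maurey and Pisier) the variance of `‖T ·‖` is
  bounded, so the mean `M` of `‖T ·‖` is at least of order `√m`.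
* Concentration and a net argument (`exists_section`) yield a subspace of dimension proportional to
  `M²`, hence to `n`, on which the norm is Euclidean up to the factor `8`. When `n` is bounded in
  terms of `K` a one-dimensional subspace is enough.
-/

open scoped ENNReal BigOperators
open MeasureTheory

noncomputable section

/-- The distribution of a sequence of `n` independent standard Gaussian variables. -/
def gaussProd (n : ℕ) : Measure (Fin n → ℝ) :=
  Measure.pi fun _ => ProbabilityTheory.gaussianReal 0 1

/-- Property (P): there is `K` so that whenever `x₁, …, xₙ` satisfy
`max_j |t_j| ≤ ‖Σ t_j x_j‖` for all scalars, then `√n ≤ K (∫ ‖Σ g_j x_j‖²)^{1/2}`. -/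
def PropertyP (X : Type*) [NormedAddCommGroup X] [NormedSpace ℝ X] : Prop :=
  ∃ K : ℝ, 0 < K ∧
    ∀ (n : ℕ) (x : Fin n → X),
      (∀ (t : Fin n → ℝ) (j : Fin n), |t j| ≤ ‖∑ i, t i • x i‖) →
      Real.sqrt n ≤ K * Real.sqrt (∫ ω, ‖∑ j, ω j • x j‖ ^ 2 ∂gaussProd n)

namespace WeakCotype

open ProbabilityTheory Filter Topology

/-- Finite powers preserve absolute continuity. -/
lemma pi_absolutelyContinuous {μ ν : Measure ℝ} [SigmaFinite μ] [SigmaFinite ν] (h : μ ≪ ν) :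
    ∀ n : ℕ, Measure.pi (fun _ : Fin n => μ) ≪ Measure.pi (fun _ : Fin n => ν)
  | 0 => by
    rw [Measure.pi_of_empty _ (fun i => Fin.elim0 i), Measure.pi_of_empty _ (fun i => Fin.elim0 i)]
  | n + 1 => by
    have ih := pi_absolutelyContinuous h n
    have h1 := (measurePreserving_piFinSuccAbove (fun _ : Fin (n + 1) => μ) 0).symm
    have h2 := (measurePreserving_piFinSuccAbove (fun _ : Fin (n + 1) => ν) 0).symm
    rw [← h1.map_eq, ← h2.map_eq]
    exact (h.prod ih).map h2.measurable

lemma stdGaussian_absolutelyContinuous (m : ℕ) :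
    stdGaussian (EuclideanSpace ℝ (Fin m)) ≪ volume := by
  rw [← map_pi_eq_stdGaussian, ← (PiLp.volume_preserving_toLp (Fin m)).map_eq]
  exact (pi_absolutelyContinuous (gaussianReal_absolutelyContinuous 0 one_ne_zero) m).map
    (PiLp.volume_preserving_toLp (Fin m)).measurable

/-! ### Gaussian concentration for Lipschitz functions -/

section Conc

variable {m : ℕ}

local notation "V" => EuclideanSpace ℝ (Fin m)
local notation "γ" => stdGaussian (EuclideanSpace ℝ (Fin m))

lemma integrable_exp_mul_norm (a : ℝ) : Integrable (fun x : V => Real.exp (a * ‖x‖)) γ := by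
  obtain ⟨C, hC, hi⟩ := IsGaussian.exists_integrable_exp_sq γ
  refine (hi.const_mul (Real.exp (a ^ 2 / (4 * C)))).mono' (by fun_prop) (ae_of_all _ fun x => ?_)
  rw [Real.norm_eq_abs, Real.abs_exp, ← Real.exp_add, Real.exp_le_exp]
  have : 0 ≤ C * (‖x‖ - a / (2 * C)) ^ 2 := by positivity
  have e : C * (‖x‖ - a / (2 * C)) ^ 2 = a ^ 2 / (4 * C) + C * ‖x‖ ^ 2 - a * ‖x‖ := by
    field_simp; ring
  linarith

lemma integral_exp_dual (L : StrongDual ℝ V) :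
    ∫ y, Real.exp (L y) ∂γ = Real.exp (‖L‖ ^ 2 / 2) := by
  have h := IsGaussian.map_eq_gaussianReal (μ := γ) L
  rw [integral_strongDual_stdGaussian, variance_dual_stdGaussian] at h
  have h2 : ∫ y, Real.exp (L y) ∂γ = ∫ t, Real.exp t ∂(Measure.map L γ) := by
    rw [integral_map (by fun_prop) (by fun_prop)]
  rw [h2, h]
  have := congrFun (mgf_id_gaussianReal (μ := 0) (v := (‖L‖ ^ 2).toNNReal)) 1
  simp only [mgf, id, one_mul] at this
  rw [this]
  simp

lemma map_rotation (θ : ℝ) :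
    (Measure.prod γ γ).map (ContinuousLinearMap.rotation θ) = Measure.prod γ γ :=
  IsGaussian.map_rotation_eq_self integral_id_stdGaussian θ

variable {f : EuclideanSpace ℝ (Fin m) → ℝ} {A : NNReal}

/-- The exponential of `a` times the difference quotient of `f` at `z.1`, when the pair `z` is
rotated by the angle `h`. As `h → 0` it tends to `exp (a * f'(z.1) z.2)`. -/
def stepFun (f : EuclideanSpace ℝ (Fin m) → ℝ) (a h : ℝ)
    (z : EuclideanSpace ℝ (Fin m) × EuclideanSpace ℝ (Fin m)) : ℝ :=
  Real.exp (a / h * (f (Real.cos h • z.1 + Real.sin h • z.2) - f z.1))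

lemma step_bound (hf : LipschitzWith A f) (h : ℝ) (z : V × V) :
    |f (Real.cos h • z.1 + Real.sin h • z.2) - f z.1| ≤ A * |h| * (‖z.1‖ + ‖z.2‖) := by
  have h1 := hf.dist_le_mul (Real.cos h • z.1 + Real.sin h • z.2) z.1
  rw [Real.dist_eq, dist_eq_norm] at h1
  refine h1.trans ?_
  rw [mul_assoc]
  gcongr
  have e : Real.cos h • z.1 + Real.sin h • z.2 - z.1
      = (Real.cos h - 1) • z.1 + Real.sin h • z.2 := by
    rw [sub_smul, one_smul]; abel
  rw [e]
  refine (norm_add_le _ _).trans ?_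
  rw [norm_smul, norm_smul, mul_add, Real.norm_eq_abs, Real.norm_eq_abs]
  have hs : |Real.sin h| ≤ |h| := Real.abs_sin_le_abs
  have hc : |Real.cos h - 1| ≤ |h| := by
    rw [abs_sub_comm, abs_of_nonneg (by linarith [Real.cos_le_one h])]
    rcases le_total 2 |h| with h2 | h2
    · linarith [Real.neg_one_le_cos h]
    · have := Real.one_sub_sq_div_two_le_cos (x := h)
      rw [← sq_abs] at this
      nlinarith [abs_nonneg h]
  gcongr

/-- A bound uniform in `h`, used as the dominating function when `h → 0`. -/
lemma stepFun_bound (hf : LipschitzWith A f) (a : ℝ) {h : ℝ} (hh : h ≠ 0) (z : V × V) :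
    stepFun f a h z ≤ Real.exp (|a| * A * ‖z.1‖) * Real.exp (|a| * A * ‖z.2‖) := by
  rw [stepFun, ← Real.exp_add, Real.exp_le_exp]
  refine (le_abs_self _).trans ?_
  rw [abs_mul, abs_div]
  calc _ ≤ |a| / |h| * (A * |h| * (‖z.1‖ + ‖z.2‖)) := by gcongr; exact step_bound hf h z
    _ = _ := by
      have : |h| ≠ 0 := abs_ne_zero.2 hh
      field_simp

lemma integrable_dom (a : ℝ) : Integrable (fun z : V × V =>
    Real.exp (a * ‖z.1‖) * Real.exp (a * ‖z.2‖)) (Measure.prod γ γ) :=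
  (integrable_exp_mul_norm a).mul_prod (integrable_exp_mul_norm a)

lemma integrable_stepFun (hf : LipschitzWith A f) (a : ℝ) {h : ℝ} (hh : h ≠ 0) :
    Integrable (stepFun f a h) (Measure.prod γ γ) := by
  have hc := hf.continuous
  refine (integrable_dom (|a| * A)).mono' ?_ (ae_of_all _ fun z => ?_)
  · refine Continuous.aestronglyMeasurable ?_
    unfold stepFun
    fun_prop
  · rw [Real.norm_eq_abs, stepFun, Real.abs_exp]
    exact stepFun_bound hf a hh z

lemma integrable_exp_diff (hf : LipschitzWith A f) (l : ℝ) :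
    Integrable (fun z : V × V => Real.exp (l * (f z.2 - f z.1))) (Measure.prod γ γ) := by
  have hc := hf.continuous
  refine (integrable_dom (|l| * A)).mono' (by fun_prop) (ae_of_all _ fun z => ?_)
  rw [Real.norm_eq_abs, Real.abs_exp, ← Real.exp_add, Real.exp_le_exp]
  refine (le_abs_self _).trans ?_
  have h1 := hf.dist_le_mul z.2 z.1
  rw [Real.dist_eq, dist_eq_norm] at h1
  rw [abs_mul, ← mul_add, mul_assoc]
  gcongr
  refine h1.trans ?_
  gcongr
  rw [add_comm]
  exact norm_sub_le _ _

/-- The quarter turn from `z.1` to `z.2` is cut into `M` rotations of angle `π / (2 M)`. Jensen's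
inequality for `exp`, applied to the telescoping sum of increments of `f`, and the rotation
invariance of `γ ⊗ γ` bound the exponential moment of `f z.2 - f z.1` by that of one step. -/
lemma diff_le_step (hf : LipschitzWith A f) (l : ℝ) (M : ℕ) (hM : 0 < M) :
    ∫ z, Real.exp (l * (f z.2 - f z.1)) ∂(Measure.prod γ γ) ≤
      ∫ z, stepFun f (l * (Real.pi / 2)) (Real.pi / 2 / M) z ∂(Measure.prod γ γ) := by
  set h : ℝ := Real.pi / 2 / M with hh
  have hM' : (0 : ℝ) < M := by exact_mod_cast hM
  have hpos : 0 < h := by positivity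
  have hal : l * (Real.pi / 2) / h = l * M := by rw [hh]; field_simp
  set F := stepFun f (l * (Real.pi / 2)) h with hF
  have hFi : Integrable F (Measure.prod γ γ) := integrable_stepFun hf _ hpos.ne'
  have hmp : ∀ θ : ℝ, MeasurePreserving (ContinuousLinearMap.rotation θ : V × V →L[ℝ] V × V)
      (Measure.prod γ γ) (Measure.prod γ γ) := fun θ => ⟨by fun_prop, map_rotation θ⟩
  have hFj : ∀ θ : ℝ, ∫ z, F (ContinuousLinearMap.rotation θ z) ∂(Measure.prod γ γ)
      = ∫ z, F z ∂(Measure.prod γ γ) := by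
    intro θ
    conv_rhs => rw [← map_rotation θ]
    rw [integral_map (by fun_prop)]
    rw [map_rotation θ]
    exact hFi.aestronglyMeasurable
  have hFij : ∀ θ : ℝ, Integrable (fun z => F (ContinuousLinearMap.rotation θ z))
      (Measure.prod γ γ) := fun θ => (hmp θ).integrable_comp_of_integrable hFi
  have key : ∀ z : V × V, Real.exp (l * (f z.2 - f z.1)) ≤
      ∑ j ∈ Finset.range M, (1 / (M : ℝ)) * F (ContinuousLinearMap.rotation (j * h) z) := by
    intro z
    let g : ℕ → ℝ := fun j => f (Real.cos (j * h) • z.1 + Real.sin (j * h) • z.2)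
    have hFg : ∀ j : ℕ, F (ContinuousLinearMap.rotation (j * h) z)
        = Real.exp (l * M * (g (j + 1) - g j)) := by
      intro j
      rw [hF, stepFun, hal, ContinuousLinearMap.rotation_apply]
      simp only [g]
      congr 4
      push_cast
      rw [show ((j : ℝ) + 1) * h = j * h + h by ring, Real.cos_add, Real.sin_add]
      module
    simp_rw [hFg]
    have hc := convexOn_exp.map_sum_le (t := Finset.range M) (w := fun _ => 1 / (M : ℝ))
      (p := fun j => l * M * (g (j + 1) - g j)) (fun _ _ => by positivity)
      (by simp [hM'.ne']) (fun _ _ => Set.mem_univ _)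
    simp only [smul_eq_mul] at hc
    refine le_trans (le_of_eq ?_) hc
    rw [← Finset.mul_sum, ← Finset.mul_sum, Finset.sum_range_sub]
    congr 1
    have e0 : g 0 = f z.1 := by simp [g]
    have e1 : g M = f z.2 := by
      have : (M : ℝ) * h = Real.pi / 2 := by rw [hh]; field_simp
      simp [g, this]
    rw [e0, e1]
    field_simp
  calc _ ≤ ∫ z, ∑ j ∈ Finset.range M, (1 / (M : ℝ)) * F (ContinuousLinearMap.rotation (j * h) z)
        ∂(Measure.prod γ γ) :=
        integral_mono (integrable_exp_diff hf l)
          (integrable_finsetSum _ fun j _ => (hFij _).const_mul _) key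
    _ = _ := by
      rw [integral_finsetSum _ fun j _ => (hFij _).const_mul _]
      simp_rw [integral_const_mul, hFj]
      simp [hM'.ne']

/-- At points of differentiability a small rotation step converges to the derivative. -/
lemma step_tendsto (a : ℝ) (z : V × V) (hd : DifferentiableAt ℝ f z.1) :
    Tendsto (fun M : ℕ => stepFun f a (Real.pi / 2 / M) z) atTop
      (𝓝 (Real.exp (a * fderiv ℝ f z.1 z.2))) := by
  have hlim : Tendsto (fun M : ℕ => Real.pi / 2 / (M : ℝ)) atTop (𝓝[≠] 0) := by
    refine tendsto_nhdsWithin_iff.2 ⟨tendsto_const_div_atTop_nhds_zero_nat _, ?_⟩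
    filter_upwards [eventually_gt_atTop 0] with M hM
    have : (0 : ℝ) < M := by exact_mod_cast hM
    have : 0 < Real.pi / 2 / M := by positivity
    exact this.ne'
  have hcurve : HasDerivAt (fun h : ℝ => Real.cos h • z.1 + Real.sin h • z.2) z.2 0 := by
    have := ((Real.hasDerivAt_cos 0).smul_const z.1).fun_add ((Real.hasDerivAt_sin 0).smul_const z.2)
    simpa using this
  have hcomp : HasDerivAt (fun h : ℝ => f (Real.cos h • z.1 + Real.sin h • z.2))
      (fderiv ℝ f z.1 z.2) 0 := by
    have hd' : HasFDerivAt f (fderiv ℝ f z.1) (Real.cos 0 • z.1 + Real.sin 0 • z.2) := by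
      simpa using hd.hasFDerivAt
    exact hd'.comp_hasDerivAt (0 : ℝ) hcurve
  have hs := (hasDerivAt_iff_tendsto_slope.1 hcomp).comp hlim
  have := (Real.continuous_exp.tendsto _).comp (hs.const_mul a)
  refine this.congr fun M => ?_
  simp only [Function.comp]
  generalize Real.pi / 2 / (M : ℝ) = h
  simp [stepFun, slope]
  ring

/-- Maurey–Pisier inequality, in symmetrized form. By Rademacher's theorem `f` is differentiable
almost everywhere for `γ ⊗ γ` in the first variable, so one may pass to the limit in
`diff_le_step`; given `z.1`, the limit is the exponential of a centred Gaussian variable. -/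
lemma integral_exp_diff_le (hf : LipschitzWith A f) (l : ℝ) :
    ∫ z, Real.exp (l * (f z.2 - f z.1)) ∂(Measure.prod γ γ) ≤
      Real.exp ((l * (Real.pi / 2)) ^ 2 * A ^ 2 / 2) := by
  set a := l * (Real.pi / 2) with ha
  have hdiff : ∀ᵐ x ∂γ, DifferentiableAt ℝ f x :=
    (stdGaussian_absolutelyContinuous m).ae_le hf.ae_differentiableAt
  have hdiff2 : ∀ᵐ z ∂(Measure.prod γ γ), DifferentiableAt ℝ f z.1 :=
    Measure.quasiMeasurePreserving_fst.ae hdiff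
  set D : V × V → ℝ := fun z => Real.exp (a * fderiv ℝ f z.1 z.2) with hD
  have hDb : ∀ z, ‖D z‖ ≤ Real.exp (|a| * A * ‖z.2‖) := by
    intro z
    rw [hD, Real.norm_eq_abs, Real.abs_exp, Real.exp_le_exp]
    refine (le_abs_self _).trans ?_
    rw [abs_mul, mul_assoc]
    gcongr
    exact ((fderiv ℝ f z.1).le_opNorm z.2).trans
      (by gcongr; exact norm_fderiv_le_of_lipschitz ℝ hf)
  have hlim : Tendsto (fun M : ℕ => ∫ z, stepFun f a (Real.pi / 2 / (M : ℝ)) z ∂(Measure.prod γ γ))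
      atTop (𝓝 (∫ z, D z ∂(Measure.prod γ γ))) := by
    refine tendsto_integral_filter_of_dominated_convergence _ ?_ ?_ (integrable_dom (|a| * A)) ?_
    · refine Eventually.of_forall fun M => Continuous.aestronglyMeasurable ?_
      have hc := hf.continuous
      unfold stepFun
      fun_prop
    · filter_upwards [eventually_gt_atTop 0] with M hM
      refine ae_of_all _ fun z => ?_
      have : (0 : ℝ) < M := by exact_mod_cast hM
      rw [Real.norm_eq_abs, stepFun, Real.abs_exp]
      exact stepFun_bound hf a (by positivity) z
    · filter_upwards [hdiff2] with z hz using step_tendsto a z hz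
  have hle : ∫ z, Real.exp (l * (f z.2 - f z.1)) ∂(Measure.prod γ γ) ≤
      ∫ z, D z ∂(Measure.prod γ γ) := by
    refine ge_of_tendsto hlim ?_
    filter_upwards [eventually_gt_atTop 0] with M hM using diff_le_step hf l M hM
  refine hle.trans ?_
  have hDmeas : Measurable D := by
    have : Measurable (fun z : V × V => fderiv ℝ f z.1 z.2) := by
      have h1 : Measurable (fun z : V × V => fderiv ℝ f z.1) :=
        (measurable_fderiv ℝ f).comp measurable_fst
      have h2 : Continuous (fun p : (V →L[ℝ] ℝ) × V => p.1 p.2) := by fun_prop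
      exact h2.measurable.comp (h1.prodMk measurable_snd)
    exact Real.measurable_exp.comp (this.const_mul a)
  have hDi : Integrable D (Measure.prod γ γ) := by
    refine Integrable.mono' (g := fun z : V × V => Real.exp (0 * ‖z.1‖)
      * Real.exp (|a| * A * ‖z.2‖)) ?_ hDmeas.aestronglyMeasurable (ae_of_all _ fun z => ?_)
    · exact (integrable_exp_mul_norm 0).mul_prod (integrable_exp_mul_norm _)
    · simpa using hDb z
  rw [integral_prod _ hDi]
  have hin : ∀ x : V, ∫ y, D (x, y) ∂γ ≤ Real.exp (a ^ 2 * A ^ 2 / 2) := by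
    intro x
    have := integral_exp_dual (a • fderiv ℝ f x)
    simp only [_root_.smul_apply, smul_eq_mul] at this
    simp only [hD]
    rw [this, Real.exp_le_exp, norm_smul, mul_pow, Real.norm_eq_abs, sq_abs]
    gcongr
    exact norm_fderiv_le_of_lipschitz ℝ hf
  calc _ ≤ ∫ x : V, Real.exp (a ^ 2 * A ^ 2 / 2) ∂γ :=
        integral_mono hDi.integral_prod_left (integrable_const _) hin
    _ = _ := by simp

end Conc

/-! ### Sub-Gaussian tails and the second moment -/

section SubG

variable {m : ℕ}

local notation "V" => EuclideanSpace ℝ (Fin m)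
local notation "γ" => stdGaussian (EuclideanSpace ℝ (Fin m))

variable {f : EuclideanSpace ℝ (Fin m) → ℝ} {A : NNReal}

lemma integrable_of_lipschitz (hf : LipschitzWith A f) : Integrable f γ := by
  have hc := hf.continuous
  have hn : Integrable (fun x : V => ‖x‖) γ := IsGaussian.integrable_id.norm
  refine ((hn.const_mul A).add (integrable_const |f 0|)).mono' (by fun_prop)
    (ae_of_all _ fun x => ?_)
  have h1 := hf.dist_le_mul x 0
  rw [Real.dist_eq, dist_zero_right] at h1
  have h2 := abs_sub_abs_le_abs_sub (f x) (f 0)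
  simp only [Pi.add_apply, Real.norm_eq_abs]
  linarith

lemma integrable_exp_lipschitz (hf : LipschitzWith A f) (l c : ℝ) :
    Integrable (fun x => Real.exp (l * (f x - c))) γ := by
  have hc := hf.continuous
  refine ((integrable_exp_mul_norm (|l| * A)).const_mul (Real.exp (|l| * |f 0 - c|))).mono'
    (by fun_prop) (ae_of_all _ fun x => ?_)
  rw [Real.norm_eq_abs, Real.abs_exp, ← Real.exp_add, Real.exp_le_exp]
  refine (le_abs_self _).trans ?_
  have h1 := hf.dist_le_mul x 0
  rw [Real.dist_eq, dist_zero_right] at h1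
  rw [abs_mul, mul_assoc, ← mul_add]
  gcongr
  calc |f x - c| = |(f 0 - c) + (f x - f 0)| := by ring_nf
    _ ≤ _ := (abs_add_le _ _).trans (by gcongr)

/-- The symmetrized inequality controls `f` itself: the exponential moment of `f z.2 - f z.1`
is the product of the moments of `f - E f` at `l` and `-l`, and the latter is at least `1` by Jensen.
The constant uses `(π / 2) ^ 2 ≤ 4`. -/
lemma hasSubgaussianMGF (hf : LipschitzWith A f) :
    HasSubgaussianMGF (fun x => f x - ∫ y, f y ∂γ) (4 * A ^ 2) γ := by
  set E := ∫ y, f y ∂γ with hE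
  refine ⟨fun t => integrable_exp_lipschitz hf t E, fun l => ?_⟩
  have hfi := integrable_of_lipschitz hf
  have h1 : 1 ≤ ∫ x, Real.exp (-l * (f x - E)) ∂γ := by
    have : ∫ x, (1 + -l * (f x - E)) ∂γ ≤ ∫ x, Real.exp (-l * (f x - E)) ∂γ := by
      refine integral_mono ?_ (integrable_exp_lipschitz hf (-l) E) fun x => ?_
      · exact (integrable_const _).add ((hfi.sub (integrable_const _)).const_mul _)
      · have := Real.add_one_le_exp (-l * (f x - E))
        simp only
        linarith
    have hfE : Integrable (fun x => f x - E) γ := hfi.sub (integrable_const _)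
    rw [integral_add (integrable_const _) (hfE.const_mul _), integral_const_mul,
      integral_sub hfi (integrable_const _)] at this
    simpa [← hE] using this
  have h2 := integral_exp_diff_le hf l
  have h3 : ∫ z, Real.exp (l * (f z.2 - f z.1)) ∂(Measure.prod γ γ)
      = (∫ x, Real.exp (-l * (f x - E)) ∂γ) * ∫ x, Real.exp (l * (f x - E)) ∂γ := by
    rw [← integral_prod_mul]
    congr 1
    ext z
    rw [← Real.exp_add]
    ring_nf
  rw [h3] at h2
  have h4 : 0 ≤ ∫ x, Real.exp (l * (f x - E)) ∂γ := integral_nonneg fun x => (Real.exp_pos _).le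
  have h5 : mgf (fun x => f x - E) γ l ≤ Real.exp ((l * (Real.pi / 2)) ^ 2 * A ^ 2 / 2) := by
    rw [mgf]
    nlinarith
  refine h5.trans (Real.exp_le_exp.2 ?_)
  push_cast
  have hp : (Real.pi / 2) ^ 2 ≤ 4 := by nlinarith [Real.pi_pos, Real.pi_le_four]
  have : 0 ≤ l ^ 2 * (A : ℝ) ^ 2 := by positivity
  nlinarith

lemma tail_le (hf : LipschitzWith A f) {t : ℝ} (ht : 0 ≤ t) :
    Measure.real γ {x | t ≤ |f x - ∫ y, f y ∂γ|} ≤ 2 * Real.exp (-t ^ 2 / (8 * A ^ 2)) := by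
  have h := hasSubgaussianMGF hf
  have h1 := h.measure_ge_le ht
  have h2 := h.neg.measure_ge_le ht
  have hsub : {x | t ≤ |f x - ∫ y, f y ∂γ|} ⊆ {x | t ≤ f x - ∫ y, f y ∂γ} ∪
      {x | t ≤ (-fun x => f x - ∫ y, f y ∂γ) x} := by
    intro x hx
    rcases le_abs.1 (show t ≤ |f x - ∫ y, f y ∂γ| from hx) with h | h
    · exact Or.inl h
    · exact Or.inr h
  refine (measureReal_mono hsub).trans ((measureReal_union_le _ _).trans ?_)
  have e : -t ^ 2 / (2 * ((4 * A ^ 2 : NNReal) : ℝ)) = -t ^ 2 / (8 * A ^ 2) := by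
    push_cast; ring_nf
  rw [e] at h1 h2
  linarith

/-- The variance of an `A`-Lipschitz function is at most `32 * A ^ 2`: expand
`u ^ 2 / 2 ≤ exp u + exp (-u) - 2` with `u = (f - E f) / A`. -/
lemma second_moment_le (hf : LipschitzWith A f) (hA : 0 < A) :
    ∫ x, f x ^ 2 ∂γ ≤ (∫ x, f x ∂γ) ^ 2 + 32 * A ^ 2 := by
  have h := hasSubgaussianMGF hf
  set E := ∫ y, f y ∂γ with hE
  have hA' : (0 : ℝ) < A := hA
  have h1 := h.mgf_le (1 / A)
  have h2 := h.mgf_le (-(1 / A))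
  have e : ∀ s : ℝ, s ^ 2 = (1 / (A : ℝ)) ^ 2 →
      Real.exp (((4 * A ^ 2 : NNReal) : ℝ) * s ^ 2 / 2) = Real.exp 2 := by
    intro s hs
    rw [hs]; push_cast
    congr 1
    field_simp
    norm_num
  rw [e _ rfl] at h1
  rw [e _ (by ring)] at h2
  have hi1 := h.integrable_exp_mul (1 / A)
  have hi2 := h.integrable_exp_mul (-(1 / A))
  have hsq : Integrable (fun x => (f x - E) ^ 2) γ := by
    have := h.memLp 2
    exact MemLp.integrable_sq this
  have hb : ∀ u : ℝ, u ^ 2 / 2 ≤ Real.exp u + Real.exp (-u) - 2 := by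
    have hpos : ∀ u : ℝ, 0 ≤ u → u ^ 2 / 2 ≤ Real.exp u + Real.exp (-u) - 2 := fun u hu => by
      linarith [Real.quadratic_le_exp_of_nonneg hu, Real.add_one_le_exp (-u)]
    intro u
    rcases le_total 0 u with hu | hu
    · exact hpos u hu
    · have := hpos (-u) (by linarith)
      rw [neg_neg, neg_sq] at this
      linarith
  have hmain : ∫ x, (1 / (A : ℝ)) ^ 2 / 2 * (f x - E) ^ 2 ∂γ ≤ 2 * Real.exp 2 - 2 := by
    calc _ ≤ ∫ x, (Real.exp (1 / A * (f x - E)) + Real.exp (-(1 / A) * (f x - E)) - 2) ∂γ := by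
          refine integral_mono (hsq.const_mul _) ((hi1.add hi2).sub (integrable_const _)) fun x => ?_
          have := hb (1 / A * (f x - E))
          simp only
          rw [mul_pow] at this
          rw [neg_mul]
          linarith
      _ = mgf (fun x => f x - E) γ (1 / A) + mgf (fun x => f x - E) γ (-(1 / A)) - 2 := by
          have h12 : Integrable (fun x => Real.exp (1 / A * (f x - E))
            + Real.exp (-(1 / A) * (f x - E))) γ := hi1.add hi2
          rw [integral_sub h12 (integrable_const _), integral_add hi1 hi2]
          simp [mgf]
      _ ≤ _ := by linarith
  rw [integral_const_mul] at hmain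
  have he : Real.exp 2 ≤ 8 := by
    have : Real.exp 2 = Real.exp 1 * Real.exp 1 := by rw [← Real.exp_add]; norm_num
    rw [this]
    nlinarith [Real.exp_one_lt_d9, Real.exp_pos 1]
  have hfi := integrable_of_lipschitz hf
  have hvar : ∫ x, (f x - E) ^ 2 ∂γ ≤ 32 * A ^ 2 := by
    have h3 : (1 / (A : ℝ)) ^ 2 * ∫ x, (f x - E) ^ 2 ∂γ ≤ 32 := by linarith
    rw [one_div, inv_pow, inv_mul_le_iff₀ (by positivity)] at h3
    linarith
  have hdec : ∫ x, f x ^ 2 ∂γ = ∫ x, (f x - E) ^ 2 ∂γ + E ^ 2 := by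
    have : ∀ x, f x ^ 2 = (f x - E) ^ 2 + (2 * E * f x - E ^ 2) := fun x => by ring
    simp_rw [this]
    have hlin : Integrable (fun x => 2 * E * f x - E ^ 2) γ :=
      (hfi.const_mul _).sub (integrable_const _)
    rw [integral_add hsq hlin,
      integral_sub (hfi.const_mul _) (integrable_const _), integral_const_mul, ← hE]
    simp
    ring
  linarith

end SubG

/-! ### Random Euclidean sections -/

section Random

/-- A unit combination of independent standard Gaussian vectors is a standard Gaussian vector, by
comparison of characteristic functions. -/
lemma map_comb {m k : ℕ} (x : EuclideanSpace ℝ (Fin k)) (hx : ‖x‖ = 1) :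
    (Measure.pi (fun _ : Fin k => stdGaussian (EuclideanSpace ℝ (Fin m)))).map
      (fun G => ∑ i, x i • G i) = stdGaussian (EuclideanSpace ℝ (Fin m)) := by
  have hmeas : Measurable (fun G : Fin k → EuclideanSpace ℝ (Fin m) => ∑ i, x i • G i) := by
    fun_prop
  have := Measure.isProbabilityMeasure_map
    (μ := Measure.pi (fun _ : Fin k => stdGaussian (EuclideanSpace ℝ (Fin m)))) hmeas.aemeasurable
  refine Measure.ext_of_charFun (funext fun t => ?_)
  rw [charFun_apply, integral_map hmeas.aemeasurable (by fun_prop)]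
  have h1 : ∀ G : Fin k → EuclideanSpace ℝ (Fin m),
      Complex.exp ((inner ℝ (∑ i, x i • G i) t : ℝ) * Complex.I)
        = ∏ i, Complex.exp ((inner ℝ (G i) (x i • t) : ℝ) * Complex.I) := by
    intro G
    rw [← Complex.exp_sum, ← Finset.sum_mul, sum_inner]
    congr 2
    rw [Complex.ofReal_sum]
    refine Finset.sum_congr rfl fun i _ => ?_
    rw [real_inner_smul_left, real_inner_smul_right]
  simp_rw [h1]
  rw [integral_fintype_prod_eq_prod (fun i (g : EuclideanSpace ℝ (Fin m)) =>
    Complex.exp ((inner ℝ g (x i • t) : ℝ) * Complex.I))]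
  simp_rw [← charFun_apply, charFun_stdGaussian]
  rw [← Complex.exp_sum]
  congr 1
  have h2 : ∑ i, x i ^ 2 = 1 := by
    have := EuclideanSpace.norm_sq_eq x
    rw [hx] at this
    simpa using this.symm
  have h3 : ∀ i, ‖x i • t‖ ^ 2 = x i ^ 2 * ‖t‖ ^ 2 := fun i => by
    rw [norm_smul, mul_pow, Real.norm_eq_abs, sq_abs]
  have h4 : ∀ i, -(‖x i • t‖ : ℂ) ^ 2 / 2 = ((x i ^ 2 : ℝ) : ℂ) * (-(‖t‖ : ℂ) ^ 2 / 2) := by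
    intro i
    have := congrArg (fun r : ℝ => (r : ℂ)) (h3 i)
    push_cast at this ⊢
    rw [this]; ring
  simp_rw [h4]
  rw [← Finset.sum_mul, ← Complex.ofReal_sum, h2]
  simp

end Random

section Net

/-- Volume bound: the balls of radius `1 / 16` around the points are disjoint and contained in the
ball of radius `17 / 16`. -/
lemma card_le_of_separated {k : ℕ} (s : Finset (EuclideanSpace ℝ (Fin k)))
    (hs : ∀ c ∈ s, ‖c‖ = 1) (h : ∀ c ∈ s, ∀ d ∈ s, c ≠ d → 1 / 8 ≤ ‖c - d‖) :
    s.card ≤ 17 ^ k := by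
  set μ : Measure (EuclideanSpace ℝ (Fin k)) := volume
  have hd : Module.finrank ℝ (EuclideanSpace ℝ (Fin k)) = k := by simp
  have D : Set.Pairwise (s : Set (EuclideanSpace ℝ (Fin k)))
      (Function.onFun Disjoint fun c => Metric.ball c (1 / 16)) := by
    rintro c hc d hd hcd
    apply Metric.ball_disjoint_ball
    rw [dist_eq_norm]
    have := h c hc d hd hcd
    linarith
  have hsub : (⋃ c ∈ s, Metric.ball c (1 / 16 : ℝ)) ⊆
      Metric.ball (0 : EuclideanSpace ℝ (Fin k)) (17 / 16) := by
    refine Set.iUnion₂_subset fun x hx => Metric.ball_subset_ball' ?_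
    rw [dist_zero_right, hs x hx]
    norm_num
  have I : (s.card : ℝ≥0∞) * ENNReal.ofReal ((1 / 16) ^ k) * μ (Metric.ball 0 1) ≤
      ENNReal.ofReal ((17 / 16) ^ k) * μ (Metric.ball 0 1) :=
    calc _ = μ (⋃ c ∈ s, Metric.ball c (1 / 16 : ℝ)) := by
          rw [measure_biUnion_finset D fun c _ => Metric.isOpen_ball.measurableSet]
          simp only [μ.addHaar_ball_of_pos _ (show (0 : ℝ) < 1 / 16 by norm_num), hd]
          simp only [Finset.sum_const, nsmul_eq_mul, mul_assoc]
      _ ≤ μ (Metric.ball 0 (17 / 16)) := measure_mono hsub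
      _ = _ := by
          simp only [μ.addHaar_ball_of_pos _ (show (0 : ℝ) < 17 / 16 by norm_num), hd]
  have J : (s.card : ℝ≥0∞) * ENNReal.ofReal ((1 / 16) ^ k) ≤ ENNReal.ofReal ((17 / 16) ^ k) :=
    (ENNReal.mul_le_mul_iff_left (Metric.measure_ball_pos _ _ zero_lt_one).ne'
      measure_ball_lt_top.ne).1 I
  have K : (s.card : ℝ) ≤ (17 : ℝ) ^ k := by
    have := ENNReal.toReal_le_of_le_ofReal (by positivity) J
    simpa [div_eq_mul_inv, mul_pow] using this
  exact_mod_cast K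

/-- A maximal `1 / 8`-separated subset of the sphere is a `1 / 8`-net. -/
lemma exists_net (k : ℕ) : ∃ s : Finset (EuclideanSpace ℝ (Fin k)),
    (∀ c ∈ s, ‖c‖ = 1) ∧ s.card ≤ 17 ^ k ∧ ∀ x, ‖x‖ = 1 → ∃ c ∈ s, ‖x - c‖ ≤ 1 / 8 := by
  classical
  let S : Set ℕ := {N | ∃ s : Finset (EuclideanSpace ℝ (Fin k)), s.card = N ∧
    (∀ c ∈ s, ‖c‖ = 1) ∧ ∀ c ∈ s, ∀ d ∈ s, c ≠ d → 1 / 8 ≤ ‖c - d‖}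
  have hbd : BddAbove S := ⟨17 ^ k, by
    rintro N ⟨s, rfl, h1, h2⟩
    exact card_le_of_separated s h1 h2⟩
  have hne : S.Nonempty := ⟨0, ∅, by simp⟩
  obtain ⟨s, hcard, h1, h2⟩ := Nat.sSup_mem hne hbd
  refine ⟨s, h1, card_le_of_separated s h1 h2, fun x hx => ?_⟩
  by_contra! hcon
  have hxs : x ∉ s := fun hxs => by
    have := hcon x hxs
    norm_num at this
  have hmem : s.card + 1 ∈ S := by
    refine ⟨insert x s, Finset.card_insert_of_notMem hxs, ?_, ?_⟩
    · intro c hc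
      rcases Finset.mem_insert.1 hc with rfl | hc
      · exact hx
      · exact h1 c hc
    · intro c hc d hd hcd
      rcases Finset.mem_insert.1 hc with hc' | hc' <;>
        rcases Finset.mem_insert.1 hd with hd' | hd'
      · exact absurd (hc'.trans hd'.symm) hcd
      · rw [hc']; exact (hcon d hd').le
      · rw [hd', norm_sub_rev]; exact (hcon c hc').le
      · exact h2 c hc' d hd' hcd
  have := le_csSup hbd hmem
  omega

end Net

section Dvoretzky

variable {X : Type*} [NormedAddCommGroup X] [NormedSpace ℝ X]

lemma lipschitz_norm_comp {m : ℕ} (T : EuclideanSpace ℝ (Fin m) →L[ℝ] X) {A : NNReal}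
    (hT : ∀ t, ‖T t‖ ≤ A * ‖t‖) : LipschitzWith A (fun t => ‖T t‖) := by
  refine LipschitzWith.of_dist_le_mul fun x y => ?_
  rw [Real.dist_eq, dist_eq_norm]
  refine (abs_norm_sub_norm_le _ _).trans ?_
  rw [← map_sub]
  exact hT _

/-- Dvoretzky-type theorem. For independent Gaussian vectors `G i`, the random operator
`x ↦ T (∑ i, x i • G i)` has norm within `M / 2` of `M` at every point of a `1 / 8`-net of the
sphere, by concentration and a union bound; the smallness of `1 / 8` extends this to all `x`. -/
lemma exists_section {m k : ℕ} (T : EuclideanSpace ℝ (Fin m) →L[ℝ] X) {A : NNReal}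
    (hT : ∀ t, ‖T t‖ ≤ A * ‖t‖) (M : ℝ)
    (hM : M = ∫ t, ‖T t‖ ∂stdGaussian (EuclideanSpace ℝ (Fin m)))
    (hk : (17 : ℝ) ^ k * (2 * Real.exp (-(M / 2) ^ 2 / (8 * A ^ 2))) < 1) :
    ∃ J : EuclideanSpace ℝ (Fin k) →L[ℝ] EuclideanSpace ℝ (Fin m),
      ∀ x, M / 4 * ‖x‖ ≤ ‖T (J x)‖ ∧ ‖T (J x)‖ ≤ 2 * M * ‖x‖ := by
  obtain ⟨s, hs1, hs2, hs3⟩ := exists_net k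
  have hM0 : 0 ≤ M := hM ▸ integral_nonneg fun _ => norm_nonneg _
  set μ := Measure.pi (fun _ : Fin k => stdGaussian (EuclideanSpace ℝ (Fin m))) with hμ
  let B : EuclideanSpace ℝ (Fin k) → Set (Fin k → EuclideanSpace ℝ (Fin m)) := fun c =>
    {G | M / 2 ≤ |‖T (∑ i, c i • G i)‖ - M|}
  have hB : ∀ c ∈ s, μ.real (B c) ≤ 2 * Real.exp (-(M / 2) ^ 2 / (8 * A ^ 2)) := by
    intro c hc
    have ht := tail_le (lipschitz_norm_comp T hT) (show 0 ≤ M / 2 by positivity)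
    rw [← hM, ← map_comb c (hs1 c hc), map_measureReal_apply (by fun_prop)] at ht
    · exact ht
    · refine measurableSet_le measurable_const ?_
      exact (by fun_prop : Continuous fun t => |‖T t‖ - M|).measurable
  have hU : μ.real (⋃ c ∈ s, B c) < 1 := by
    refine lt_of_le_of_lt ((measureReal_biUnion_finset_le _ _).trans
      ((Finset.sum_le_sum hB).trans ?_)) hk
    rw [Finset.sum_const, nsmul_eq_mul]
    gcongr
    exact_mod_cast hs2
  obtain ⟨G, hG⟩ : ∃ G, G ∉ ⋃ c ∈ s, B c := by
    by_contra! hcon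
    rw [Set.eq_univ_of_forall hcon] at hU
    simp at hU
  have hG' : ∀ c ∈ s, |‖T (∑ i, c i • G i)‖ - M| < M / 2 := by
    intro c hc
    by_contra! h
    exact hG (Set.mem_biUnion hc h)
  let J : EuclideanSpace ℝ (Fin k) →L[ℝ] EuclideanSpace ℝ (Fin m) :=
    ∑ i, (EuclideanSpace.proj i : EuclideanSpace ℝ (Fin k) →L[ℝ] ℝ).smulRight (G i)
  have hJ : ∀ x, J x = ∑ i, x i • G i := fun x => by simp [J]
  have hnet : ∀ c ∈ s, M / 2 ≤ ‖T (J c)‖ ∧ ‖T (J c)‖ ≤ 3 * M / 2 := by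
    intro c hc
    have := abs_lt.1 (hG' c hc)
    rw [hJ]
    constructor <;> linarith
  set b := ‖T.comp J‖ with hb
  have hbx : ∀ x, ‖T (J x)‖ ≤ b * ‖x‖ := fun x => (T.comp J).le_opNorm x
  have hdiff : ∀ x c, ‖x - c‖ ≤ 1 / 8 → |‖T (J x)‖ - ‖T (J c)‖| ≤ b / 8 := by
    intro x c hxc
    refine (abs_norm_sub_norm_le _ _).trans ?_
    rw [← map_sub, ← map_sub]
    refine (hbx _).trans ?_
    have : 0 ≤ b := norm_nonneg _
    nlinarith
  have hbM : b ≤ 3 * M / 2 + b / 8 := by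
    refine ContinuousLinearMap.opNorm_le_of_unit_norm (by positivity) fun x hx => ?_
    obtain ⟨c, hc, hxc⟩ := hs3 x hx
    have h1 := (abs_le.1 (hdiff x c hxc)).2
    have h2 := (hnet c hc).2
    simp only [ContinuousLinearMap.comp_apply]
    linarith
  have hlow : ∀ x, ‖x‖ = 1 → M / 4 ≤ ‖T (J x)‖ := by
    intro x hx
    obtain ⟨c, hc, hxc⟩ := hs3 x hx
    have h1 := (abs_le.1 (hdiff x c hxc)).1
    have h2 := (hnet c hc).1
    linarith
  refine ⟨J, fun x => ⟨?_, ?_⟩⟩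
  · rcases eq_or_ne x 0 with rfl | hx
    · simp
    · have hx' : 0 < ‖x‖ := norm_pos_iff.2 hx
      have := hlow (‖x‖⁻¹ • x) (by rw [norm_smul, norm_inv, norm_norm, inv_mul_cancel₀ hx'.ne'])
      rw [map_smul, map_smul, norm_smul, norm_inv, norm_norm, inv_mul_eq_div,
        le_div_iff₀ hx'] at this
      exact this
  · refine (hbx x).trans ?_
    gcongr
    linarith

end Dvoretzky

/-! ### John position -/

section John

/-- `u` is a contact point of the unit sphere with the unit ball of the pulled back norm `‖S ·‖`,
in dual form: `u` is a unit vector and `⟪u, ·⟫` has norm at most one for `‖S ·‖`. When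
`‖S y‖ ≤ ‖y‖` for all `y`, taking `y = u` gives `‖S u‖ = 1`. -/
def IsContact {V Y : Type*} [NormedAddCommGroup V] [InnerProductSpace ℝ V]
    [NormedAddCommGroup Y] [NormedSpace ℝ Y] (S : V →L[ℝ] Y) (u : V) : Prop :=
  ‖u‖ = 1 ∧ ∀ y, inner ℝ u y ≤ ‖S y‖

/-- First order expansion `det (1 + t H) = 1 + t * tr H + O(t ^ 2)`. -/
lemma eventually_one_lt_det {n : ℕ}
    (H : EuclideanSpace ℝ (Fin n) →L[ℝ] EuclideanSpace ℝ (Fin n))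
    (hH : 0 < LinearMap.trace ℝ _ (H : EuclideanSpace ℝ (Fin n) →ₗ[ℝ] EuclideanSpace ℝ (Fin n))) :
    ∀ᶠ t : ℝ in 𝓝[>] 0, 1 < (ContinuousLinearMap.id ℝ _ + t • H).det := by
  set b := (EuclideanSpace.basisFun (Fin n) ℝ).toBasis
  set Mx := LinearMap.toMatrix b b (H : EuclideanSpace ℝ (Fin n) →ₗ[ℝ] EuclideanSpace ℝ (Fin n))
    with hMx
  have htr : Mx.trace = LinearMap.trace ℝ _
      (H : EuclideanSpace ℝ (Fin n) →ₗ[ℝ] EuclideanSpace ℝ (Fin n)) := by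
    rw [LinearMap.trace_eq_matrix_trace ℝ b]
  have hdet : ∀ t : ℝ, (ContinuousLinearMap.id ℝ _ + t • H).det = (1 + t • Mx).det := by
    intro t
    rw [ContinuousLinearMap.det, ← LinearMap.det_toMatrix b]
    congr 1
    simp [hMx]
  obtain ⟨q, hq⟩ : ∃ q : Polynomial ℝ, ∀ t : ℝ, (1 + t • Mx).det
      = 1 + Mx.trace * t + q.eval t * t ^ 2 := ⟨_, fun t => Matrix.det_one_add_smul t Mx⟩
  have hlim : Tendsto (fun t : ℝ => Mx.trace + q.eval t * t) (𝓝[>] 0) (𝓝 Mx.trace) := by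
    have hc : Continuous fun t : ℝ => Mx.trace + q.eval t * t := by fun_prop
    have := hc.tendsto 0
    simp only [mul_zero, add_zero] at this
    exact this.mono_left nhdsWithin_le_nhds
  filter_upwards [hlim.eventually_const_lt (htr ▸ hH), self_mem_nhdsWithin] with t ht ht0
  have ht0' : 0 < t := ht0
  rw [hdet, hq]
  nlinarith [mul_pos ht ht0']

/-- There is a norm-one-bounded operator from Euclidean space to `Y` of maximal determinant, the
determinant being measured relative to `S` itself. -/
lemma exists_max_det (Y : Type*) [NormedAddCommGroup Y] [NormedSpace ℝ Y] [FiniteDimensional ℝ Y]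
    {n : ℕ} (hn : Module.finrank ℝ Y = n) :
    ∃ S : EuclideanSpace ℝ (Fin n) →L[ℝ] Y, (∀ x, ‖S x‖ ≤ ‖x‖) ∧
      ∀ R : EuclideanSpace ℝ (Fin n) →L[ℝ] EuclideanSpace ℝ (Fin n),
        (∀ x, ‖S (R x)‖ ≤ ‖x‖) → R.det ≤ 1 := by
  let e : EuclideanSpace ℝ (Fin n) ≃L[ℝ] Y :=
    ContinuousLinearEquiv.ofFinrankEq (by rw [hn]; simp)
  set 𝒦 : Set (EuclideanSpace ℝ (Fin n) →L[ℝ] EuclideanSpace ℝ (Fin n)) :=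
    {R | ∀ x, ‖e (R x)‖ ≤ ‖x‖} with h𝒦
  have hclosed : IsClosed 𝒦 := by
    rw [h𝒦, Set.ofPred_forall]
    refine isClosed_iInter fun x => isClosed_le ?_ continuous_const
    fun_prop
  have hbdd : Bornology.IsBounded 𝒦 := by
    refine (Metric.isBounded_closedBall (x := 0)
      (r := ‖(e.symm : Y →L[ℝ] EuclideanSpace ℝ (Fin n))‖)).subset fun R hR => ?_
    rw [mem_closedBall_zero_iff]
    refine ContinuousLinearMap.opNorm_le_bound _ (norm_nonneg _) fun x => ?_
    have h1 := (e.symm : Y →L[ℝ] EuclideanSpace ℝ (Fin n)).le_opNorm (e (R x))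
    simp only [ContinuousLinearEquiv.coe_coe, ContinuousLinearEquiv.symm_apply_apply] at h1
    refine h1.trans ?_
    gcongr
    exact hR x
  have hcompact : IsCompact 𝒦 := Metric.isCompact_of_isClosed_isBounded hclosed hbdd
  obtain ⟨R₀, hR₀, hmax⟩ := hcompact.exists_isMaxOn (f := fun R => R.det)
    ⟨0, fun x => by simp⟩ ContinuousLinearMap.continuous_det.continuousOn
  have hpos : 0 < R₀.det := by
    set ε : ℝ := (‖(e : EuclideanSpace ℝ (Fin n) →L[ℝ] Y)‖ + 1)⁻¹ with hε
    have hε0 : 0 < ε := by positivity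
    have hmem : ε • ContinuousLinearMap.id ℝ (EuclideanSpace ℝ (Fin n)) ∈ 𝒦 := by
      intro x
      have h1 := (e : EuclideanSpace ℝ (Fin n) →L[ℝ] Y).le_opNorm x
      simp only [ContinuousLinearEquiv.coe_coe] at h1
      simp only [_root_.smul_apply, ContinuousLinearMap.id_apply, map_smul, norm_smul,
        Real.norm_eq_abs, abs_of_pos hε0]
      rw [hε, inv_mul_le_iff₀ (by positivity)]
      nlinarith [norm_nonneg x]
    refine lt_of_lt_of_le ?_ (hmax hmem)
    have : (ε • ContinuousLinearMap.id ℝ (EuclideanSpace ℝ (Fin n))).det = ε ^ n := by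
      rw [ContinuousLinearMap.det]
      simp [LinearMap.det_smul]
    simp only [this]
    positivity
  refine ⟨(e : EuclideanSpace ℝ (Fin n) →L[ℝ] Y).comp R₀, fun x => hR₀ x, fun R hR => ?_⟩
  have h1 : R₀.comp R ∈ 𝒦 := fun x => hR x
  have h2 : (R₀.comp R).det ≤ R₀.det := hmax h1
  have h3 : (R₀.comp R).det = R₀.det * R.det := by
    simp [ContinuousLinearMap.det]
  rw [h3] at h2
  exact le_of_mul_le_mul_left (by linarith) hpos

/-- Variational form of John's theorem. If `tr H > 0` then `det (1 + t H) > 1` for small `t > 0`, so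
maximality of `S` yields a unit vector `x` with `‖S (x + t H x)‖ > 1`. A norming functional, pulled
back to a vector `w` by `S`, satisfies `⟪w, x⟫ + t ⟪w, H x⟫ > 1`; as `t → 0` both `x` and `w`
converge, along a subsequence, to a common contact point `u` with `⟪u, H u⟫ ≥ 0`. -/
lemma exists_john (Y : Type*) [NormedAddCommGroup Y] [NormedSpace ℝ Y] [FiniteDimensional ℝ Y]
    {n : ℕ} (hn : Module.finrank ℝ Y = n) :
    ∃ S : EuclideanSpace ℝ (Fin n) →L[ℝ] Y, (∀ x, ‖S x‖ ≤ ‖x‖) ∧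
      ∀ H : EuclideanSpace ℝ (Fin n) →L[ℝ] EuclideanSpace ℝ (Fin n),
        0 < LinearMap.trace ℝ _ (H : EuclideanSpace ℝ (Fin n) →ₗ[ℝ] EuclideanSpace ℝ (Fin n)) →
        ∃ u, IsContact S u ∧ 0 ≤ inner ℝ u (H u) := by
  obtain ⟨S, hS, hdet⟩ := exists_max_det Y hn
  refine ⟨S, hS, fun H hH => ?_⟩
  have hev := eventually_one_lt_det H hH
  have hstep : ∀ᶠ t : ℝ in 𝓝[>] 0, ∃ x w : EuclideanSpace ℝ (Fin n), ‖x‖ = 1 ∧ ‖w‖ ≤ 1 ∧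
      (∀ y, inner ℝ w y ≤ ‖S y‖) ∧ 0 ≤ inner ℝ w (H x) ∧ 1 - t * ‖H‖ ≤ inner ℝ w x := by
    filter_upwards [hev, self_mem_nhdsWithin] with t ht ht0
    have ht0' : 0 < t := ht0
    obtain ⟨x₀, hx₀⟩ : ∃ x, ‖x‖ < ‖S ((ContinuousLinearMap.id ℝ (EuclideanSpace ℝ (Fin n)) + t • H) x)‖ := by
      by_contra! hcon
      exact absurd (hdet _ hcon) (not_le.2 ht)
    have hx₀0 : x₀ ≠ 0 := by
      rintro rfl
      simp at hx₀
    have hx₀p : 0 < ‖x₀‖ := norm_pos_iff.2 hx₀0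
    set x := ‖x₀‖⁻¹ • x₀ with hx
    have hx1 : ‖x‖ = 1 := by rw [hx, norm_smul, norm_inv, norm_norm, inv_mul_cancel₀ hx₀p.ne']
    have hxS : 1 < ‖S (x + t • H x)‖ := by
      have e : x + t • H x = ‖x₀‖⁻¹ • ((ContinuousLinearMap.id ℝ (EuclideanSpace ℝ (Fin n)) + t • H) x₀) := by
        simp [hx, smul_comm t]
      rw [e, map_smul, norm_smul, norm_inv, norm_norm, inv_mul_eq_div, lt_div_iff₀ hx₀p, one_mul]
      exact hx₀
    obtain ⟨g, hg1, hg2⟩ := exists_dual_vector'' ℝ (S (x + t • H x))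
    set w := (InnerProductSpace.toDual ℝ (EuclideanSpace ℝ (Fin n))).symm (g.comp S) with hw
    have hwy : ∀ y, inner ℝ w y = g (S y) := fun y => by
      rw [hw, InnerProductSpace.toDual_symm_apply]; rfl
    have hwS : ∀ y, inner ℝ w y ≤ ‖S y‖ := fun y => by
      rw [hwy]
      refine (le_abs_self _).trans ((g.le_opNorm _).trans ?_)
      nlinarith [norm_nonneg (S y)]
    have hw1 : ‖w‖ ≤ 1 := by
      have h1 := (hwS w).trans (hS w)
      rw [real_inner_self_eq_norm_sq] at h1
      nlinarith [norm_nonneg w]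
    have hmain : 1 < inner ℝ w x + t * inner ℝ w (H x) := by
      rw [← real_inner_smul_right, ← inner_add_right, hwy, hg2]
      exact hxS
    have hle : inner ℝ w x ≤ 1 := by
      refine (real_inner_le_norm w x).trans ?_
      rw [hx1, mul_one]; exact hw1
    have hHle : inner ℝ w (H x) ≤ ‖H‖ := by
      refine (real_inner_le_norm w _).trans ?_
      have := H.le_opNorm x
      rw [hx1, mul_one] at this
      nlinarith [norm_nonneg (H x)]
    refine ⟨x, w, hx1, hw1, hwS, ?_, ?_⟩
    · by_contra! hneg
      nlinarith
    · nlinarith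
  have hseq : Tendsto (fun k : ℕ => 1 / ((k : ℝ) + 1)) atTop (𝓝[>] 0) := by
    refine tendsto_nhdsWithin_iff.2 ⟨tendsto_one_div_add_atTop_nhds_zero_nat, ?_⟩
    exact Eventually.of_forall fun k => by
      simp only [Set.mem_Ioi]; positivity
  obtain ⟨N, hN⟩ := eventually_atTop.1 (hseq.eventually hstep)
  choose x w hx hw hwS hwH hwx using fun k : ℕ => hN (k + N) (by omega)
  have hcomp : IsCompact ((Metric.closedBall (0 : EuclideanSpace ℝ (Fin n)) 1) ×ˢ
      (Metric.closedBall (0 : EuclideanSpace ℝ (Fin n)) 1)) :=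
    (isCompact_closedBall _ _).prod (isCompact_closedBall _ _)
  obtain ⟨⟨u, v⟩, -, φ, hφ, hlim⟩ := hcomp.tendsto_subseq (x := fun k => (x k, w k))
    (fun k => ⟨by simp [hx k], by simpa using hw k⟩)
  have hu : Tendsto (fun k => x (φ k)) atTop (𝓝 u) := (continuous_fst.tendsto _).comp hlim
  have hv : Tendsto (fun k => w (φ k)) atTop (𝓝 v) := (continuous_snd.tendsto _).comp hlim
  have hu1 : ‖u‖ = 1 := by
    refine tendsto_nhds_unique hu.norm ?_
    simp [hx]
  have hv1 : ‖v‖ ≤ 1 := le_of_tendsto hv.norm (Eventually.of_forall fun k => hw _)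
  have huv : 1 ≤ inner ℝ v u := by
    have h1 : Tendsto (fun k : ℕ => 1 - 1 / (((φ k + N : ℕ) : ℝ) + 1) * ‖H‖) atTop (𝓝 1) := by
      have h0 : Tendsto (fun k : ℕ => φ k + N) atTop atTop :=
        tendsto_atTop_mono (fun k => Nat.le_add_right _ _) hφ.tendsto_atTop
      have := ((tendsto_one_div_add_atTop_nhds_zero_nat (𝕜 := ℝ)).comp h0).mul_const ‖H‖
      simpa using this.const_sub 1
    exact le_of_tendsto_of_tendsto' h1 (hv.inner hu) fun k => hwx (φ k)
  have hveq : v = u := by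
    have h1 : ‖v - u‖ ^ 2 ≤ 0 := by
      rw [norm_sub_sq_real, hu1]
      nlinarith [norm_nonneg v]
    have : ‖v - u‖ = 0 := by nlinarith [norm_nonneg (v - u)]
    exact sub_eq_zero.1 (norm_eq_zero.1 this)
  subst hveq
  refine ⟨v, ⟨hu1, fun y => ?_⟩, ?_⟩
  · exact le_of_tendsto (hv.inner tendsto_const_nhds) (Eventually.of_forall fun k => hwS _ y)
  · exact ge_of_tendsto (hv.inner ((H.continuous.tendsto _).comp hu))
      (Eventually.of_forall fun k => hwH _)

end John

/-! ### Selecting a well-conditioned set of contact points -/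

section Barrier

open Matrix

variable {ι : Type*} [Fintype ι] [DecidableEq ι]

/-- The symmetric matrix `P` bordered by the row and column `v`, with corner entry `d`. -/
def border (P : Matrix ι ι ℝ) (v : ι → ℝ) (d : ℝ) : Matrix (ι ⊕ Unit) (ι ⊕ Unit) ℝ :=
  fromBlocks P (Matrix.of fun i _ => v i) (Matrix.of fun _ i => v i) (Matrix.of fun _ _ => d)

/-- Schur complement criterion: with `y` and `z` the two blocks of `x` and `w = P⁻¹ v`, the quadratic
form is `(y + z w)ᵀ P (y + z w) + (d - vᵀ P⁻¹ v) z ^ 2`. -/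
lemma border_posDef {P : Matrix ι ι ℝ} (hP : P.PosDef) (v : ι → ℝ) (d : ℝ)
    (hs : 0 < d - v ⬝ᵥ P⁻¹ *ᵥ v) : (border P v d).PosDef := by
  have hPsymm : Pᵀ = P := by simpa [Matrix.IsSymm] using hP.1
  have hPu : IsUnit P.det := (Matrix.isUnit_iff_isUnit_det _).1 hP.isUnit
  set w := P⁻¹ *ᵥ v with hw
  have hPw : P *ᵥ w = v := by
    rw [hw, mulVec_mulVec, mul_nonsing_inv _ hPu, one_mulVec]
  refine PosDef.of_dotProduct_mulVec_pos ?_ fun x hx => ?_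
  · rw [border, Matrix.IsHermitian, fromBlocks_conjTranspose]
    congr 1
  set y : ι → ℝ := fun i => x (Sum.inl i) with hy
  set z : ℝ := x (Sum.inr ()) with hz
  have hform : star x ⬝ᵥ border P v d *ᵥ x
      = (y + z • w) ⬝ᵥ P *ᵥ (y + z • w) + (d - v ⬝ᵥ w) * z ^ 2 := by
    have h1 : star x ⬝ᵥ border P v d *ᵥ x = y ⬝ᵥ P *ᵥ y + 2 * z * (v ⬝ᵥ y) + d * z ^ 2 := by
      have e : border P v d *ᵥ x = Sum.elim (P *ᵥ y + z • v) (fun _ => v ⬝ᵥ y + d * z) := by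
        ext (i | i)
        · simp [border, mulVec, dotProduct, hy, hz, mul_comm]
        · simp [border, mulVec, dotProduct, hy, hz]
      rw [e]
      have e2 : star x = Sum.elim y (fun _ => z) := by
        ext (i | i) <;> simp [hy, hz]
      rw [e2, sumElim_dotProduct_sumElim, dotProduct_add, dotProduct_smul, dotProduct_comm y v]
      simp [dotProduct]
      ring
    have h2 : w ⬝ᵥ P *ᵥ y = v ⬝ᵥ y := by
      rw [dotProduct_mulVec, ← mulVec_transpose, hPsymm, hPw]
    rw [h1, mulVec_add, mulVec_smul, hPw]
    simp only [dotProduct_add, add_dotProduct, smul_dotProduct, dotProduct_smul, h2, smul_eq_mul,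
      dotProduct_comm y v, dotProduct_comm w v]
    ring
  rw [hform]
  by_cases hz0 : z = 0
  · have hy0 : y ≠ 0 := by
      rintro h
      apply hx
      ext (i | i)
      · exact congrFun h i
      · exact hz0
    have := hP.dotProduct_mulVec_pos hy0
    simpa [hz0] using this
  · have h1 := hP.posSemidef.dotProduct_mulVec_nonneg (y + z • w)
    simp only [star_trivial] at h1
    have : 0 < (d - v ⬝ᵥ w) * z ^ 2 := by positivity
    linarith

/-- Trace of the block inverse given by the Schur complement. -/
lemma border_inv_trace {P : Matrix ι ι ℝ} (hP : P.PosDef) (v : ι → ℝ) (d : ℝ)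
    (hs : 0 < d - v ⬝ᵥ P⁻¹ *ᵥ v) :
    ((border P v d)⁻¹).trace = P⁻¹.trace +
      (1 + (P⁻¹ *ᵥ v) ⬝ᵥ (P⁻¹ *ᵥ v)) / (d - v ⬝ᵥ P⁻¹ *ᵥ v) := by
  have hPsymm : Pᵀ = P := by simpa [Matrix.IsSymm] using hP.1
  have hPu : IsUnit P.det := (Matrix.isUnit_iff_isUnit_det _).1 hP.isUnit
  set w := P⁻¹ *ᵥ v with hw
  have hPw : P *ᵥ w = v := by
    rw [hw, mulVec_mulVec, mul_nonsing_inv _ hPu, one_mulVec]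
  have hvN : v ᵥ* P⁻¹ = w := by
    rw [hw, ← vecMul_transpose, transpose_nonsing_inv, hPsymm]
  set s := d - v ⬝ᵥ w with hsdef
  have hinv : (border P v d)⁻¹ = border (P⁻¹ + s⁻¹ • vecMulVec w w) (-(s⁻¹ • w)) s⁻¹ := by
    apply inv_eq_right_inv
    rw [border, border, fromBlocks_multiply, ← fromBlocks_one]
    congr 1
    · rw [mul_add, mul_nonsing_inv _ hPu, Matrix.mul_smul, mul_vecMulVec, hPw]
      ext i j
      simp [mul_apply, vecMulVec_apply]
      ring
    · ext i j
      have := congrFun hPw i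
      simp only [mulVec, dotProduct] at this
      have h2 : ∑ x, P i x * (s⁻¹ * w x) = s⁻¹ * v i := by
        rw [← this, Finset.mul_sum]
        exact Finset.sum_congr rfl fun _ _ => by ring
      simp [mul_apply, h2]
      ring
    · ext i j
      have h1 := congrFun hvN j
      simp only [vecMul, dotProduct] at h1
      simp [mul_apply, mul_add, Finset.sum_add_distrib, h1, vecMulVec_apply]
      have : ∑ x, v x * (s⁻¹ * (w x * w j)) = s⁻¹ * w j * (v ⬝ᵥ w) := by
        rw [dotProduct, Finset.mul_sum]
        exact Finset.sum_congr rfl fun _ _ => by ring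
      rw [this]
      have hvw : v ⬝ᵥ w = d - s := by rw [hsdef]; ring
      rw [hvw]
      field_simp
      ring
    · ext i j
      have : ∑ x, v x * (s⁻¹ * w x) = s⁻¹ * (v ⬝ᵥ w) := by
        rw [dotProduct, Finset.mul_sum]
        exact Finset.sum_congr rfl fun _ _ => by ring
      have hvw : v ⬝ᵥ w = d - s := by rw [hsdef]; ring
      simp [mul_apply, this, hvw]
      field_simp
      ring
  have htr : ∀ (A : Matrix ι ι ℝ) (a : ι → ℝ) (b : ℝ), (border A a b).trace = A.trace + b := by
    intro A a b
    simp [border, trace]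
  rw [hinv, htr, trace_add, trace_smul, trace_vecMulVec, smul_eq_mul]
  field_simp
  ring

/-- Shifting the barrier by `η` lowers the trace of the inverse by at least `η * tr (N * N)`, where
`N = (Q + η)⁻¹`. This follows from the resolvent identity `Q⁻¹ = N + η Q⁻¹ N`, used twice. -/
lemma trace_shift {Q : Matrix ι ι ℝ} (hQ : Q.PosDef) {η : ℝ} (hη : 0 < η) :
    (Q + η • (1 : Matrix ι ι ℝ)).PosDef ∧
      (Q + η • (1 : Matrix ι ι ℝ))⁻¹.trace
        + η * ((Q + η • (1 : Matrix ι ι ℝ))⁻¹ * (Q + η • (1 : Matrix ι ι ℝ))⁻¹).trace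
        ≤ Q⁻¹.trace := by
  have hP : (Q + η • (1 : Matrix ι ι ℝ)).PosDef := hQ.add (PosDef.one.smul hη)
  refine ⟨hP, ?_⟩
  set P := Q + η • (1 : Matrix ι ι ℝ) with hPdef
  have hPu : IsUnit P.det := (Matrix.isUnit_iff_isUnit_det _).1 hP.isUnit
  have hQu : IsUnit Q.det := (Matrix.isUnit_iff_isUnit_det _).1 hQ.isUnit
  set N := P⁻¹ with hN
  set R := Q⁻¹ with hR
  have h1 : R = N + η • (R * N) := by
    have e1 : R * P = 1 + η • R := by
      rw [hPdef, mul_add, hR, nonsing_inv_mul _ hQu]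
      simp
    calc R = R * P * N := by rw [mul_assoc, hN, mul_nonsing_inv _ hPu, mul_one]
      _ = N + η • (R * N) := by rw [e1, add_mul, one_mul, smul_mul_assoc]
  have hNs : Nᴴ = N := hP.inv.1
  have h2 : 0 ≤ (N * R * N).trace := by
    have := (hQ.inv.posSemidef.conjTranspose_mul_mul_same N).trace_nonneg
    rwa [hNs] at this
  have h3 : (R * N).trace = (N * N).trace + η * (N * R * N).trace := by
    have : R * N = N * N + η • (R * N * N) := by
      conv_lhs => rw [h1]
      rw [add_mul, smul_mul_assoc]
    rw [this, trace_add, trace_smul, smul_eq_mul, trace_mul_cycle R N N]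
  have h4 : R.trace = N.trace + η * (R * N).trace := by
    conv_lhs => rw [h1]
    rw [trace_add, trace_smul, smul_eq_mul]
  rw [h4, h3]
  have : 0 ≤ η * (η * (N * R * N).trace) := by positivity
  linarith


/-- The Gram matrix of a finite family of vectors. -/
def gramMat {n : ℕ} (u : ι → EuclideanSpace ℝ (Fin n)) : Matrix ι ι ℝ :=
  Matrix.of fun i j => inner ℝ (u i) (u j)

/-- One step of the barrier argument. Put `N = (G - b')⁻¹` with `G` the Gram matrix. The condition
`1 + ‖N v‖ ^ 2 ≤ c * (1 - b' - vᵀ N v)`, where `v i = ⟪u i, x⟫`, reads `0 ≤ ⟪x, H x⟫` for an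
explicit operator `H` when `x` is a unit vector. The trace of `H` is positive, so the hypothesis on
`𝒰` provides such an `x`, and the Schur complement bounds the new trace. -/
lemma exists_next {n : ℕ} (hn : 0 < n) {𝒰 : Set (EuclideanSpace ℝ (Fin n))}
    (h1 : ∀ x ∈ 𝒰, ‖x‖ = 1)
    (hH : ∀ H : EuclideanSpace ℝ (Fin n) →L[ℝ] EuclideanSpace ℝ (Fin n),
      0 < LinearMap.trace ℝ _ (H : EuclideanSpace ℝ (Fin n) →ₗ[ℝ] EuclideanSpace ℝ (Fin n)) →
      ∃ x ∈ 𝒰, 0 ≤ inner ℝ x (H x))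
    (u : ι → EuclideanSpace ℝ (Fin n)) {b' : ℝ} (hb : b' ≤ 1 / 4)
    (hcard : 8 * Fintype.card ι ≤ n)
    (hP : (gramMat u - b' • (1 : Matrix ι ι ℝ)).PosDef)
    {c : ℝ}
    (hτ : ((gramMat u - b' • (1 : Matrix ι ι ℝ))⁻¹).trace ≤ n)
    (hc : 8 + ((gramMat u - b' • (1 : Matrix ι ι ℝ))⁻¹ *
      (gramMat u - b' • (1 : Matrix ι ι ℝ))⁻¹).trace / n ≤ c) :
    ∃ x ∈ 𝒰, (border (gramMat u - b' • (1 : Matrix ι ι ℝ)) (fun i => inner ℝ (u i) x)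
        (1 - b')).PosDef ∧
      ((border (gramMat u - b' • (1 : Matrix ι ι ℝ)) (fun i => inner ℝ (u i) x)
        (1 - b'))⁻¹).trace ≤ (gramMat u - b' • (1 : Matrix ι ι ℝ))⁻¹.trace + c := by
  set P := gramMat u - b' • (1 : Matrix ι ι ℝ) with hPdef
  have hPu : IsUnit P.det := (Matrix.isUnit_iff_isUnit_det _).1 hP.isUnit
  set N := P⁻¹ with hN
  have hNs : Nᵀ = N := by
    have := hP.inv.1
    simpa [Matrix.IsSymm] using this
  have hn' : (0 : ℝ) < n := by exact_mod_cast hn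
  have hG : gramMat u = P + b' • (1 : Matrix ι ι ℝ) := by rw [hPdef]; simp
  have hσ0 : 0 ≤ (N * N).trace := by
    have := (posSemidef_conjTranspose_mul_self N).trace_nonneg
    rwa [conjTranspose_eq_transpose_of_trivial, hNs] at this
  have hτ0 : 0 ≤ N.trace := hP.inv.posSemidef.trace_nonneg
  set τ := N.trace
  set σ := (N * N).trace
  have hNG : (N * gramMat u).trace = Fintype.card ι + b' * τ := by
    rw [hG, mul_add, hN, nonsing_inv_mul _ hPu, trace_add, trace_one]
    simp [τ, hN]
  have hNNG : (N * N * gramMat u).trace = τ + b' * σ := by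
    rw [hG, mul_add, mul_assoc N N P, hN, nonsing_inv_mul _ hPu, trace_add]
    simp [τ, σ, hN]
  set W := c • N + N * N with hW
  set α := c * (1 - b') - 1 with hα
  set H : EuclideanSpace ℝ (Fin n) →L[ℝ] EuclideanSpace ℝ (Fin n) :=
    α • ContinuousLinearMap.id ℝ _
      - ∑ i, ∑ j, W i j • InnerProductSpace.rankOne ℝ (u i) (u j) with hHdef
  -- `∑ W i j ⟪u i, x⟫ ⟪u j, x⟫ = c * vᵀ N v + ‖N v‖ ^ 2`, which explains the choice of `W`.
  have htrace : LinearMap.trace ℝ _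
      (H : EuclideanSpace ℝ (Fin n) →ₗ[ℝ] EuclideanSpace ℝ (Fin n))
      = α * n - (W * gramMat u).trace := by
    have e : (H : EuclideanSpace ℝ (Fin n) →ₗ[ℝ] EuclideanSpace ℝ (Fin n)) =
        α • LinearMap.id - ∑ i, ∑ j, W i j •
          ((InnerProductSpace.rankOne ℝ (u i) (u j) :
            EuclideanSpace ℝ (Fin n) →L[ℝ] EuclideanSpace ℝ (Fin n)) :
            EuclideanSpace ℝ (Fin n) →ₗ[ℝ] EuclideanSpace ℝ (Fin n)) := by
      ext1 x
      simp [hHdef]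
    rw [e, map_sub, map_smul, map_sum]
    congr 1
    · simp
    · rw [trace]
      refine Finset.sum_congr rfl fun i _ => ?_
      rw [map_sum, diag_apply, mul_apply]
      refine Finset.sum_congr rfl fun j _ => ?_
      rw [map_smul, InnerProductSpace.trace_rankOne]
      rfl
  have hpos : 0 < LinearMap.trace ℝ _
      (H : EuclideanSpace ℝ (Fin n) →ₗ[ℝ] EuclideanSpace ℝ (Fin n)) := by
    rw [htrace, hW, add_mul, trace_add, smul_mul_assoc, trace_smul, hNG, hNNG, smul_eq_mul, hα]
    have hk : (8 : ℝ) * Fintype.card ι ≤ n := by exact_mod_cast hcard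
    have hcn : 8 * n + σ ≤ c * n := by
      have := mul_le_mul_of_nonneg_right hc hn'.le
      rwa [add_mul, div_mul_cancel₀ _ hn'.ne'] at this
    have hc8 : 8 ≤ c := le_trans (by have := div_nonneg hσ0 hn'.le; linarith) hc
    have hbτ : b' * τ ≤ 1 / 4 * n := mul_le_mul hb hτ hτ0 (by norm_num)
    have hbn : b' * n ≤ 1 / 4 * n := by gcongr
    have hbσ : b' * σ ≤ 1 / 4 * σ := by gcongr
    have key : 3 / 8 * n ≤ n - b' * n - (Fintype.card ι + b' * τ) := by linarith
    have key2 := mul_le_mul_of_nonneg_left key (by linarith : (0 : ℝ) ≤ c)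
    nlinarith
  obtain ⟨x, hx, hxH⟩ := hH H hpos
  refine ⟨x, hx, ?_⟩
  set v : ι → ℝ := fun i => inner ℝ (u i) x with hv
  have hquad : inner ℝ x (H x) = α - v ⬝ᵥ W *ᵥ v := by
    rw [hHdef]
    simp only [_root_.sub_apply, _root_.smul_apply, ContinuousLinearMap.id_apply, inner_sub_right,
      real_inner_smul_right, real_inner_self_eq_norm_sq, h1 x hx, _root_.sum_apply,
      inner_sum, InnerProductSpace.rankOne_apply]
    congr 1
    · ring
    · rw [dotProduct]
      refine Finset.sum_congr rfl fun i _ => ?_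
      rw [mulVec, dotProduct, Finset.mul_sum]
      refine Finset.sum_congr rfl fun j _ => ?_
      rw [real_inner_comm (u i) x]
      simp only [hv]
      ring
  have hWv : v ⬝ᵥ W *ᵥ v = c * (v ⬝ᵥ N *ᵥ v) + (N *ᵥ v) ⬝ᵥ (N *ᵥ v) := by
    rw [hW, add_mulVec, smul_mulVec, dotProduct_add, dotProduct_smul, smul_eq_mul,
      ← mulVec_mulVec, dotProduct_mulVec v N (N *ᵥ v), ← mulVec_transpose, hNs]
  rw [hquad, hWv, hα] at hxH
  have hNv : 0 ≤ (N *ᵥ v) ⬝ᵥ (N *ᵥ v) := Finset.sum_nonneg fun i _ => mul_self_nonneg _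
  have hle : 1 + (N *ᵥ v) ⬝ᵥ (N *ᵥ v) ≤ c * (1 - b' - v ⬝ᵥ N *ᵥ v) := by linarith
  have hc0 : 0 < c := lt_of_lt_of_le (by have := div_nonneg hσ0 hn'.le; linarith) hc
  have hs : 0 < 1 - b' - v ⬝ᵥ N *ᵥ v := by
    by_contra! hcon
    nlinarith
  refine ⟨border_posDef hP v _ hs, ?_⟩
  rw [border_inv_trace hP v _ hs]
  gcongr
  rwa [div_le_iff₀ hs]

/-- For each `k ≤ n / 8` there are `k` vectors of `𝒰` whose Gram matrix exceeds
`(1 / 4 - k / n)` times the identity. The bound on the trace of the inverse, `8 k`, is the potential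
that keeps the induction going: each new vector costs at most `8`. -/
lemma exists_gram {n : ℕ} (hn : 0 < n) {𝒰 : Set (EuclideanSpace ℝ (Fin n))}
    (h1 : ∀ x ∈ 𝒰, ‖x‖ = 1)
    (hH : ∀ H : EuclideanSpace ℝ (Fin n) →L[ℝ] EuclideanSpace ℝ (Fin n),
      0 < LinearMap.trace ℝ _ (H : EuclideanSpace ℝ (Fin n) →ₗ[ℝ] EuclideanSpace ℝ (Fin n)) →
      ∃ x ∈ 𝒰, 0 ≤ inner ℝ x (H x)) (k : ℕ) (hk : 8 * k ≤ n) :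
    ∃ (κ : Type) (_ : Fintype κ) (_ : DecidableEq κ) (u : κ → EuclideanSpace ℝ (Fin n)),
      Fintype.card κ = k ∧ (∀ i, u i ∈ 𝒰) ∧
      (gramMat u - (1 / 4 - (k : ℝ) / n) • (1 : Matrix κ κ ℝ)).PosDef ∧
      ((gramMat u - (1 / 4 - (k : ℝ) / n) • (1 : Matrix κ κ ℝ))⁻¹).trace ≤ 8 * k := by
  have hn' : (0 : ℝ) < n := by exact_mod_cast hn
  induction k with
  | zero =>
    refine ⟨Fin 0, inferInstance, inferInstance, Fin.elim0, rfl, fun i => i.elim0, ?_, ?_⟩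
    · refine PosDef.of_dotProduct_mulVec_pos (Matrix.ext fun i => i.elim0) fun x hx => ?_
      exact absurd (Subsingleton.elim x 0) hx
    · simp [trace]
  | succ k ih =>
    obtain ⟨κ, _, _, u, hcard, hu, hQ, htr⟩ := ih (by omega)
    set Q := gramMat u - (1 / 4 - (k : ℝ) / n) • (1 : Matrix κ κ ℝ) with hQdef
    set b' : ℝ := 1 / 4 - ((k + 1 : ℕ) : ℝ) / n with hb'
    have hη : (0 : ℝ) < 1 / n := by positivity
    have hshift : Q + (1 / n : ℝ) • (1 : Matrix κ κ ℝ) = gramMat u - b' • (1 : Matrix κ κ ℝ) := by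
      have : (1 / 4 - (k : ℝ) / n) = b' + 1 / n := by rw [hb']; push_cast; ring
      rw [hQdef, this, add_smul]
      abel
    obtain ⟨hP, hsh⟩ := trace_shift hQ hη
    rw [hshift] at hP hsh
    have hkn : (8 : ℝ) * (k + 1) ≤ n := by exact_mod_cast hk
    have hb1 : b' ≤ 1 / 4 := by
      have : 0 ≤ ((k + 1 : ℕ) : ℝ) / n := by positivity
      rw [hb']; linarith
    have hσ0 : 0 ≤ ((gramMat u - b' • (1 : Matrix κ κ ℝ))⁻¹ *
        (gramMat u - b' • (1 : Matrix κ κ ℝ))⁻¹).trace := by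
      have := (posSemidef_conjTranspose_mul_self
        (gramMat u - b' • (1 : Matrix κ κ ℝ))⁻¹).trace_nonneg
      rwa [hP.inv.1] at this
    have hησ := mul_nonneg hη.le hσ0
    obtain ⟨x, hx, hpd, htr'⟩ := exists_next hn h1 hH u hb1 (by rw [hcard]; omega) hP
      (c := 8 + Q⁻¹.trace - (gramMat u - b' • (1 : Matrix κ κ ℝ))⁻¹.trace)
      (by linarith) (by rw [div_eq_inv_mul, ← one_div]; linarith)
    have hgram : gramMat (Sum.elim u fun _ : Unit => x) - b' • (1 : Matrix (κ ⊕ Unit) (κ ⊕ Unit) ℝ)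
        = border (gramMat u - b' • (1 : Matrix κ κ ℝ)) (fun i => inner ℝ (u i) x) (1 - b') := by
      ext (i | i) (j | j)
      · simp [gramMat, border, one_apply]
      · simp [gramMat, border]
      · simp [gramMat, border, real_inner_comm]
      · simp [gramMat, border, h1 x hx]
    refine ⟨κ ⊕ Unit, inferInstance, inferInstance, Sum.elim u fun _ => x, by simp [hcard], ?_,
      ?_, ?_⟩
    · rintro (i | i)
      · exact hu i
      · exact hx
    · rw [hgram]; exact hpd
    · rw [hgram]; push_cast; linarith

/-- The map `T₀` to a system biorthogonal to the selected vectors. If `B t = ∑ t j • u j`, then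
`‖B t‖ ^ 2 ≥ ‖t‖ ^ 2 / 8`, and `T₀ = B (Bᵀ B)⁻¹` has norm at most `√8 ≤ 3`. -/
lemma exists_dual_map {n : ℕ} (hn : 0 < n) {𝒰 : Set (EuclideanSpace ℝ (Fin n))}
    (h1 : ∀ x ∈ 𝒰, ‖x‖ = 1)
    (hH : ∀ H : EuclideanSpace ℝ (Fin n) →L[ℝ] EuclideanSpace ℝ (Fin n),
      0 < LinearMap.trace ℝ _ (H : EuclideanSpace ℝ (Fin n) →ₗ[ℝ] EuclideanSpace ℝ (Fin n)) →
      ∃ x ∈ 𝒰, 0 ≤ inner ℝ x (H x)) {m : ℕ} (hm : 8 * m ≤ n) :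
    ∃ (T₀ : EuclideanSpace ℝ (Fin m) →L[ℝ] EuclideanSpace ℝ (Fin n))
      (u : Fin m → EuclideanSpace ℝ (Fin n)), (∀ i, u i ∈ 𝒰) ∧ (∀ t, ‖T₀ t‖ ≤ 3 * ‖t‖) ∧
      ∀ t j, inner ℝ (u j) (T₀ t) = t j := by
  obtain ⟨κ, _, _, u', hcard, hu', hpd, -⟩ := exists_gram hn h1 hH m hm
  have hn' : (0 : ℝ) < n := by exact_mod_cast hn
  have hb : 1 / 8 ≤ 1 / 4 - (m : ℝ) / n := by
    have hm' : (8 : ℝ) * m ≤ n := by exact_mod_cast hm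
    have : (m : ℝ) / n ≤ 1 / 8 := by
      rw [div_le_div_iff₀ hn' (by norm_num)]; linarith
    linarith
  have hlow' : ∀ t : κ → ℝ, 1 / 8 * ∑ i, t i ^ 2 ≤ ‖∑ i, t i • u' i‖ ^ 2 := by
    intro t
    have h2 := hpd.posSemidef.dotProduct_mulVec_nonneg t
    rw [star_trivial, sub_mulVec, smul_mulVec, one_mulVec, dotProduct_sub, dotProduct_smul,
      smul_eq_mul] at h2
    have h3 : t ⬝ᵥ gramMat u' *ᵥ t = ‖∑ i, t i • u' i‖ ^ 2 := by
      rw [← real_inner_self_eq_norm_sq, sum_inner, dotProduct]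
      refine Finset.sum_congr rfl fun i _ => ?_
      rw [inner_sum, mulVec, dotProduct, Finset.mul_sum]
      refine Finset.sum_congr rfl fun j _ => ?_
      rw [real_inner_smul_left, real_inner_smul_right, gramMat, of_apply]
      ring
    have h4 : t ⬝ᵥ t = ∑ i, t i ^ 2 := Finset.sum_congr rfl fun i _ => by ring
    rw [h3, h4] at h2
    have h5 : 0 ≤ ∑ i, t i ^ 2 := Finset.sum_nonneg fun i _ => sq_nonneg _
    nlinarith
  let e : κ ≃ Fin m := Fintype.equivFinOfCardEq hcard
  set u : Fin m → EuclideanSpace ℝ (Fin n) := fun j => u' (e.symm j) with hu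
  set B : EuclideanSpace ℝ (Fin m) →L[ℝ] EuclideanSpace ℝ (Fin n) :=
    ∑ j, (EuclideanSpace.proj j : EuclideanSpace ℝ (Fin m) →L[ℝ] ℝ).smulRight (u j) with hB
  have hBapp : ∀ t, B t = ∑ j, t j • u j := fun t => by
    simp [hB]
  have hlow : ∀ t, 1 / 8 * ‖t‖ ^ 2 ≤ ‖B t‖ ^ 2 := by
    intro t
    have h2 := hlow' fun i => t (e i)
    have e1 : ∑ i, t (e i) ^ 2 = ‖t‖ ^ 2 := by
      rw [EuclideanSpace.real_norm_sq_eq, ← e.sum_comp]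
    have e2 : ∑ i, t (e i) • u' i = B t := by
      rw [hBapp, ← e.sum_comp]
      simp [hu]
    rwa [e1, e2] at h2
  set A := ContinuousLinearMap.adjoint B with hA
  have hAapp : ∀ x j, A x j = inner ℝ (u j) x := by
    intro x j
    have h2 := ContinuousLinearMap.adjoint_inner_right B (EuclideanSpace.single j (1 : ℝ)) x
    have h3 : B (EuclideanSpace.single j (1 : ℝ)) = u j := by
      rw [hBapp, Finset.sum_eq_single j] <;> simp +contextual
    rw [h3, EuclideanSpace.inner_single_left] at h2
    simpa using h2
  have hinner : ∀ t, inner ℝ t (A (B t)) = ‖B t‖ ^ 2 := fun t => by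
    rw [hA, ContinuousLinearMap.adjoint_inner_right, real_inner_self_eq_norm_sq]
  have hinj : Function.Injective ((A.comp B : EuclideanSpace ℝ (Fin m) →L[ℝ] _) :
      EuclideanSpace ℝ (Fin m) →ₗ[ℝ] EuclideanSpace ℝ (Fin m)) := by
    rw [← LinearMap.ker_eq_bot, LinearMap.ker_eq_bot']
    intro t ht
    have h2 : A (B t) = 0 := ht
    have h3 := hinner t
    rw [h2, inner_zero_right] at h3
    have h4 := hlow t
    have : ‖t‖ ^ 2 ≤ 0 := by linarith
    exact norm_eq_zero.1 (by nlinarith [norm_nonneg t])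
  let D := LinearEquiv.ofInjectiveEndo _ hinj
  have hD : ∀ t, A (B (D.symm t)) = t := fun t => D.apply_symm_apply t
  refine ⟨B.comp (LinearMap.toContinuousLinearMap (D.symm : _ →ₗ[ℝ] _)), u, fun i => hu' _,
    fun t => ?_, fun t j => ?_⟩
  · change ‖B (D.symm t)‖ ≤ 3 * ‖t‖
    have h2 := hinner (D.symm t)
    rw [hD] at h2
    have h3 := real_inner_le_norm (D.symm t) t
    have h4 := hlow (D.symm t)
    have h5 : ‖D.symm t‖ ≤ 3 * ‖B (D.symm t)‖ := by
      refine abs_le_of_sq_le_sq' ?_ (by positivity) |>.2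
      nlinarith [sq_nonneg ‖B (D.symm t)‖]
    by_contra! hcon
    nlinarith [norm_nonneg t, norm_nonneg (B (D.symm t)), norm_nonneg (D.symm t),
      mul_le_mul_of_nonneg_right h5 (norm_nonneg t)]
  · change inner ℝ (u j) (B (D.symm t)) = t j
    rw [← hAapp, hD]

end Barrier

/-- A subspace of dimension `n` contains a system of `m ≤ n / 8` vectors that dominates the sup norm,
while its synthesis operator on Euclidean space has norm at most `3`. -/
lemma exists_operator {X : Type*} [NormedAddCommGroup X] [NormedSpace ℝ X]
    (E : Submodule ℝ X) [FiniteDimensional ℝ E] {m : ℕ}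
    (hn : 0 < Module.finrank ℝ E) (hm : 8 * m ≤ Module.finrank ℝ E) :
    ∃ T : EuclideanSpace ℝ (Fin m) →L[ℝ] X, (∀ t, T t ∈ E) ∧ (∀ t, ‖T t‖ ≤ 3 * ‖t‖) ∧
      ∀ t j, |t j| ≤ ‖T t‖ := by
  obtain ⟨S, hS, hJ⟩ := exists_john E rfl
  obtain ⟨T₀, u, hu, hT₀, hTu⟩ := exists_dual_map hn (𝒰 := {x | IsContact S x})
    (fun x hx => hx.1) hJ hm
  refine ⟨E.subtypeL.comp (S.comp T₀), fun t => (S (T₀ t)).2, fun t => ?_, fun t j => ?_⟩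
  · exact (hS (T₀ t)).trans (hT₀ t)
  · change |t j| ≤ ‖S (T₀ t)‖
    refine abs_le.2 ⟨?_, ?_⟩
    · have h := (hu j).2 (T₀ (-t))
      rw [hTu, map_neg, map_neg, norm_neg] at h
      have h2 : (-t) j = -(t j) := rfl
      rw [h2] at h
      linarith
    · have h := (hu j).2 (T₀ t)
      rwa [hTu] at h

/-! ### Euclidean subspaces of proportional dimension -/

section Assembly

variable {X : Type*} [NormedAddCommGroup X] [NormedSpace ℝ X]

/-- `E` contains a subspace `F` of dimension `k` at Banach–Mazur distance at most `8` from Euclidean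
space, the distance being witnessed by an isomorphism `L` and a scale `c`. -/
def HasSection (E : Submodule ℝ X) (k : ℕ) : Prop :=
  ∃ F : Submodule ℝ X, F ≤ E ∧ Module.finrank ℝ F = k ∧
    ∃ (L : F ≃ₗ[ℝ] EuclideanSpace ℝ (Fin (Module.finrank ℝ F))) (c : ℝ), 0 < c ∧
      ∀ v : F, c * ‖v‖ ≤ ‖L v‖ ∧ ‖L v‖ ≤ 8 * c * ‖v‖

/-- A two-sided estimate for an operator on Euclidean space gives a Euclidean section, its range. -/
lemma hasSection_of_map (E : Submodule ℝ X) {k : ℕ} (J : EuclideanSpace ℝ (Fin k) →ₗ[ℝ] X)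
    (hJE : ∀ x, J x ∈ E) {a : ℝ} (ha : 0 < a)
    (hJ : ∀ x, a * ‖x‖ ≤ ‖J x‖ ∧ ‖J x‖ ≤ 8 * a * ‖x‖) : HasSection E k := by
  have hinj : Function.Injective J := by
    rw [← LinearMap.ker_eq_bot, LinearMap.ker_eq_bot']
    intro x hx
    have h := (hJ x).1
    rw [hx, norm_zero] at h
    exact norm_eq_zero.1 (by nlinarith [norm_nonneg x])
  have hfin : Module.finrank ℝ (LinearMap.range J) = k := by
    rw [LinearMap.finrank_range_of_inj hinj]; simp
  refine ⟨LinearMap.range J, ?_, hfin, ?_⟩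
  · rintro _ ⟨x, rfl⟩
    exact hJE x
  · have key : ∀ k', k' = k → ∃ (L : LinearMap.range J ≃ₗ[ℝ] EuclideanSpace ℝ (Fin k')) (c : ℝ),
        0 < c ∧ ∀ v : LinearMap.range J, c * ‖v‖ ≤ ‖L v‖ ∧ ‖L v‖ ≤ 8 * c * ‖v‖ := by
      rintro _ rfl
      refine ⟨(LinearEquiv.ofInjective J hinj).symm, 1 / (8 * a), by positivity, fun v => ?_⟩
      obtain ⟨x, rfl⟩ := (LinearEquiv.ofInjective J hinj).surjective v
      rw [LinearEquiv.symm_apply_apply]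
      have h1 : ‖LinearEquiv.ofInjective J hinj x‖ = ‖J x‖ := rfl
      rw [h1]
      obtain ⟨h2, h3⟩ := hJ x
      constructor
      · rw [one_div, inv_mul_le_iff₀ (by positivity)]
        exact h3
      · have : 8 * (1 / (8 * a)) = a⁻¹ := by field_simp
        rw [this, ← div_eq_inv_mul, le_div_iff₀ ha, mul_comm]
        exact h2
    exact key _ hfin

lemma hasSection_zero (E : Submodule ℝ X) : HasSection E 0 :=
  hasSection_of_map E 0 (fun x => by simp) one_pos fun x => by
    rw [Subsingleton.elim x 0]; simp

lemma hasSection_one (E : Submodule ℝ X) (hE : E ≠ ⊥) : HasSection E 1 := by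
  obtain ⟨v, hv, hv0⟩ := E.exists_mem_ne_zero_of_ne_bot hE
  have hvp := norm_pos_iff.2 hv0
  refine hasSection_of_map E
    ((EuclideanSpace.proj (0 : Fin 1) : EuclideanSpace ℝ (Fin 1) →L[ℝ] ℝ).smulRight v :
      EuclideanSpace ℝ (Fin 1) →L[ℝ] X).toLinearMap
    (fun x => E.smul_mem _ hv) hvp fun x => ?_
  have hx : ‖x‖ = |x 0| := by simp [EuclideanSpace.norm_eq, Real.sqrt_sq_eq_abs]
  have h : ‖((EuclideanSpace.proj (0 : Fin 1) : EuclideanSpace ℝ (Fin 1) →L[ℝ] ℝ).smulRight v :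
      EuclideanSpace ℝ (Fin 1) →L[ℝ] X).toLinearMap x‖ = |x 0| * ‖v‖ := by
    simp [norm_smul]
  rw [h, hx]
  constructor <;> nlinarith [mul_nonneg (abs_nonneg (x 0)) hvp.le]

/-- Property (P) for the vectors `T e_j`, in terms of the standard Gaussian measure. -/
lemma second_moment_ge {K : ℝ} (hK : 0 < K)
    (hP : ∀ (n : ℕ) (x : Fin n → X),
      (∀ (t : Fin n → ℝ) (j : Fin n), |t j| ≤ ‖∑ i, t i • x i‖) →
      Real.sqrt n ≤ K * Real.sqrt (∫ ω, ‖∑ j, ω j • x j‖ ^ 2 ∂gaussProd n))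
    {m : ℕ} (T : EuclideanSpace ℝ (Fin m) →L[ℝ] X) (hT : ∀ t j, |t j| ≤ ‖T t‖) :
    (m : ℝ) / K ^ 2 ≤ ∫ t, ‖T t‖ ^ 2 ∂stdGaussian (EuclideanSpace ℝ (Fin m)) := by
  set x : Fin m → X := fun i => T (EuclideanSpace.single i 1) with hx
  have hsum : ∀ t : Fin m → ℝ, ∑ i, t i • x i = T (WithLp.toLp 2 t) := by
    intro t
    simp only [hx, ← map_smul, ← map_sum]
    congr 1
    ext j
    simp [Pi.single_apply]
  have h := hP m x fun t j => by
    rw [hsum]; exact hT (WithLp.toLp 2 t) j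
  have hint : ∫ ω, ‖∑ j, ω j • x j‖ ^ 2 ∂gaussProd m
      = ∫ t, ‖T t‖ ^ 2 ∂stdGaussian (EuclideanSpace ℝ (Fin m)) := by
    rw [← map_pi_eq_stdGaussian, integral_map]
    · simp only [hsum]; rfl
    · fun_prop
    · exact Continuous.aestronglyMeasurable (by fun_prop)
  rw [hint] at h
  set I := ∫ t, ‖T t‖ ^ 2 ∂stdGaussian (EuclideanSpace ℝ (Fin m))
  have hI : 0 ≤ I := integral_nonneg fun t => by positivity
  have h2 := pow_le_pow_left₀ (Real.sqrt_nonneg _) h 2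
  rw [mul_pow, Real.sq_sqrt (Nat.cast_nonneg _), Real.sq_sqrt hI] at h2
  rw [div_le_iff₀ (by positivity)]
  linarith

/-- In large dimension, property (P) gives `M ^ 2 ≥ m / (2 K ^ 2)` for the Gaussian mean `M` of
`‖T ·‖`, and `exists_section` applies in dimension proportional to `m`. -/
lemma hasSection_of_large {K : ℝ} (hK : 0 < K)
    (hP : ∀ (n : ℕ) (x : Fin n → X),
      (∀ (t : Fin n → ℝ) (j : Fin n), |t j| ≤ ‖∑ i, t i • x i‖) →
      Real.sqrt n ≤ K * Real.sqrt (∫ ω, ‖∑ j, ω j • x j‖ ^ 2 ∂gaussProd n))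
    (E : Submodule ℝ X) [FiniteDimensional ℝ E]
    (hn : 8 * (8 * (576 * K ^ 2) + 1) ≤ (Module.finrank ℝ E : ℝ)) :
    ∃ k : ℕ, (Module.finrank ℝ E : ℝ) / (256 * (576 * K ^ 2)) ≤ k ∧ HasSection E k := by
  set n := Module.finrank ℝ E with hndef
  set Λ := 576 * K ^ 2 with hΛ
  have hΛ0 : 0 < Λ := by positivity
  set m := n / 8 with hm
  have hmn : 8 * m ≤ n := Nat.mul_div_le n 8
  have hmn' : (n : ℝ) < 8 * (m + 1) := by
    have : n < 8 * (m + 1) := by omega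
    exact_mod_cast this
  have hmΛ : 8 * Λ ≤ m := by linarith
  have hn0 : 0 < n := by
    have : (0 : ℝ) < n := by nlinarith
    exact_mod_cast this
  obtain ⟨T, hTE, hT3, hTj⟩ := exists_operator E hn0 hmn
  have hT3' : ∀ t, ‖T t‖ ≤ (3 : NNReal) * ‖t‖ := by simpa using hT3
  set M := ∫ t, ‖T t‖ ∂stdGaussian (EuclideanSpace ℝ (Fin m)) with hM
  have h1 := second_moment_ge hK hP T hTj
  have h2 := second_moment_le (lipschitz_norm_comp T hT3') (by norm_num)
  have hM0 : 0 ≤ M := integral_nonneg fun t => norm_nonneg _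
  have hMK : (m : ℝ) / (2 * K ^ 2) ≤ M ^ 2 := by
    have h3 : (m : ℝ) / K ^ 2 = m / (2 * K ^ 2) + m / (2 * K ^ 2) := by field_simp; ring
    -- The variance bound is `32 * 3 ^ 2 = 288`, which is at most half of `m / K ^ 2`.
    have h4 : 288 ≤ (m : ℝ) / (2 * K ^ 2) := by
      rw [le_div_iff₀ (by positivity)]
      nlinarith
    have h5 := h1.trans h2
    rw [h3] at h5
    norm_num at h5
    linarith
  have hmΛ1 : 1 ≤ (m : ℝ) / (8 * Λ) := by
    rw [le_div_iff₀ (by positivity)]; linarith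
  have hm0 : (0 : ℝ) < m := by linarith
  have hMpos : 0 < M := by
    have : 0 < (m : ℝ) / (2 * K ^ 2) := by positivity
    by_contra! hcon
    have : M = 0 := le_antisymm hcon hM0
    rw [this] at hMK
    norm_num at hMK
    linarith
  set k := ⌊(m : ℝ) / (8 * Λ)⌋₊ with hk
  have hk1 : (1 : ℝ) ≤ k := by
    have : 1 ≤ k := Nat.le_floor (by simpa using hmΛ1)
    exact_mod_cast this
  have hkle : (k : ℝ) ≤ m / (8 * Λ) := Nat.floor_le (by positivity)
  have hklt : (m : ℝ) / (8 * Λ) < k + 1 := Nat.lt_floor_add_one _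
  have hexp : (17 : ℝ) ^ k * (2 * Real.exp (-(M / 2) ^ 2 / (8 * ((3 : NNReal) : ℝ) ^ 2))) < 1 := by
    have e17 : (17 : ℝ) ≤ Real.exp 3 := by
      have h := Real.exp_one_gt_d9
      have : Real.exp 3 = Real.exp 1 ^ 3 := by rw [← Real.exp_nat_mul]; norm_num
      rw [this]
      calc (17 : ℝ) ≤ 2.7 ^ 3 := by norm_num
        _ ≤ Real.exp 1 ^ 3 := by gcongr; linarith
    have e2 : (2 : ℝ) ≤ Real.exp 1 := by
      have h := Real.exp_one_gt_d9
      linarith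
    have hlin : 4 * (k : ℝ) ≤ m / (2 * Λ) := by
      have : (m : ℝ) / (2 * Λ) = 4 * (m / (8 * Λ)) := by field_simp; ring
      rw [this]; linarith
    have hMΛ : (m : ℝ) / Λ ≤ M ^ 2 / 288 := by
      have : (m : ℝ) / Λ = m / (2 * K ^ 2) / 288 := by rw [hΛ]; field_simp; ring
      rw [this]; linarith
    have hhalf : (m : ℝ) / (2 * Λ) < m / Λ := by
      have h3 : (m : ℝ) / Λ = 2 * (m / (2 * Λ)) := by field_simp
      have : 0 < (m : ℝ) / (2 * Λ) := by positivity
      linarith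
    calc (17 : ℝ) ^ k * (2 * Real.exp (-(M / 2) ^ 2 / (8 * ((3 : NNReal) : ℝ) ^ 2)))
        ≤ Real.exp 3 ^ k *
          (Real.exp 1 * Real.exp (-(M / 2) ^ 2 / (8 * ((3 : NNReal) : ℝ) ^ 2))) := by
          gcongr
      _ = Real.exp (3 * k + 1 - M ^ 2 / 288) := by
          rw [← Real.exp_nat_mul, ← Real.exp_add, ← Real.exp_add]
          congr 1
          simp
          ring
      _ < 1 := by
          rw [Real.exp_lt_one_iff]
          linarith
  obtain ⟨J, hJ⟩ := exists_section T hT3' M hM hexp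
  refine ⟨k, ?_, hasSection_of_map E (T.comp J).toLinearMap (fun x => hTE _)
    (a := M / 4) (by positivity) fun x => ⟨(hJ x).1, (hJ x).2.trans (le_of_eq ?_)⟩⟩
  · rw [div_le_iff₀ (by positivity)]
    rw [div_lt_iff₀ (by positivity)] at hklt
    have hm1 : (1 : ℝ) ≤ m := by
      have : 0 < m := by exact_mod_cast hm0
      exact_mod_cast this
    have : ((k : ℝ) + 1) * (8 * Λ) ≤ (2 * k) * (8 * Λ) := by gcongr; linarith
    linarith
  · ring

end Assembly

end WeakCotype

/-- If a Banach space `X` has property (P), then `X` is of weak cotype 2. -/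
theorem statement16 (X : Type*) [NormedAddCommGroup X] [NormedSpace ℝ X]
    [CompleteSpace X] (hP : PropertyP X) :
    ∃ C δ : ℝ, 0 < C ∧ 0 < δ ∧ δ < 1 ∧
      ∀ E : Submodule ℝ X, FiniteDimensional ℝ E →
        ∃ F : Submodule ℝ X, F ≤ E ∧
          δ * (Module.finrank ℝ E : ℝ) ≤ (Module.finrank ℝ F : ℝ) ∧
          ∃ (L : F ≃ₗ[ℝ] EuclideanSpace ℝ (Fin (Module.finrank ℝ F))) (c : ℝ), 0 < c ∧
            ∀ v : F, c * ‖v‖ ≤ ‖L v‖ ∧ ‖L v‖ ≤ C * c * ‖v‖ := by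
  obtain ⟨K, hK, hP⟩ := hP
  have hΛ : 0 < 576 * K ^ 2 := by positivity
  refine ⟨8, 1 / (256 * (576 * K ^ 2) + 8), by norm_num, by positivity, ?_, fun E hE => ?_⟩
  · rw [div_lt_one (by positivity)]
    linarith
  suffices h : ∃ k : ℕ, 1 / (256 * (576 * K ^ 2) + 8) * (Module.finrank ℝ E : ℝ) ≤ k ∧
      WeakCotype.HasSection E k by
    obtain ⟨k, hk, F, hF, hFk, hL⟩ := h
    exact ⟨F, hF, by rw [hFk]; exact hk, hL⟩
  rcases le_or_gt (8 * (8 * (576 * K ^ 2) + 1)) (Module.finrank ℝ E : ℝ) with hn | hn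
  · obtain ⟨k, hk, hsec⟩ := WeakCotype.hasSection_of_large hK hP E hn
    refine ⟨k, le_trans ?_ hk, hsec⟩
    rw [one_div_mul_eq_div]
    gcongr
    linarith
  -- In bounded dimension a line suffices, or the zero subspace if `E` is trivial.
  · by_cases hE0 : E = ⊥
    · refine ⟨0, ?_, WeakCotype.hasSection_zero E⟩
      rw [hE0]
      simp
    · refine ⟨1, ?_, WeakCotype.hasSection_one E hE0⟩
      rw [one_div_mul_eq_div, div_le_iff₀ (by positivity)]
      push_cast
      linarith
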